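/- Under the standing assumptions, there exist A₀ ≥ 1 and c₁ > 0, depending only on n, the AD-regularity constant C₀, c, c' and the constants in the weak-A∞ condition in B_{R₀}, such that if A ≥ A₀ then the set G₀ := R₀ \ (B_H ∪ B_L) satisfies ω^p(G₀) ≥ c₁ and μ(G₀) ≥ c₁ μ(R₀). -/

import Mathlib

open Metric MeasureTheory Set Filter Topology

noncomputable section

/-- Euclidean space `ℝ^d`. -/
abbrev Euc (d : ℕ) : Type := EuclideanSpace ℝ (Fin d)

namespace HarmMeas

/-- Distance between two sets. -/
def setD {d : ℕ} (s t : Set (Euc d)) : ℝ := sInf (Set.image2 dist s t)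

/-- A continuous function is subharmonic on `U` if it satisfies the sub-mean-value
property on every ball whose closure is contained in `U`. -/
def SubharmonicOn {d : ℕ} (u : Euc d → ℝ) (U : Set (Euc d)) : Prop :=
  ContinuousOn u U ∧ ∀ x ∈ U, ∀ r : ℝ, 0 < r → closedBall x r ⊆ U →
    u x ≤ ⨍ y in ball x r, u y

/-- Harmonic (continuous) functions: both `u` and `-u` are subharmonic. -/
def HarmonicOnS {d : ℕ} (u : Euc d → ℝ) (U : Set (Euc d)) : Prop :=
  SubharmonicOn u U ∧ SubharmonicOn (fun y => -u y) U

/-- The upper (Perron) class associated to boundary data `f` on the open set `Ω`: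
superharmonic functions on `Ω`, bounded below, whose liminf at each boundary point
dominates `f` there. -/
def upperFamily {d : ℕ} (Ω : Set (Euc d)) (f : Euc d → ℝ) : Set (Euc d → ℝ) :=
  {u | SubharmonicOn (fun y => -u y) Ω ∧ BddBelow (u '' Ω) ∧
       ∀ ξ ∈ frontier Ω, f ξ ≤ Filter.liminf u (nhdsWithin ξ Ω)}

/-- The (upper) Perron solution of the Dirichlet problem in `Ω` with boundary data `f`,
evaluated at `p`. -/
def perron {d : ℕ} (Ω : Set (Euc d)) (f : Euc d → ℝ) (p : Euc d) : ℝ :=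
  sInf ((fun u => u p) '' upperFamily Ω f)

/-- Harmonic measure `ω^p(A)` of `A` for the open set `Ω` with pole `p`: the value at `p`
of the Perron solution with boundary data the characteristic function of `A`. -/
def hMeasure {d : ℕ} (Ω : Set (Euc d)) (p : Euc d) (A : Set (Euc d)) : ℝ :=
  perron Ω (A.indicator fun _ => 1) p

/-- The Green function `g(p,x)` of `Ω ⊆ ℝ^{n+1}` with pole `p`: the fundamental solution
`|x-p|^{1-n}` minus the Perron solution with the fundamental solution as boundary data. -/
def greenFn (n : ℕ) (Ω : Set (Euc (n+1))) (p x : Euc (n+1)) : ℝ :=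
  ‖x - p‖ ^ ((1 : ℤ) - n) - perron Ω (fun ξ => ‖ξ - p‖ ^ ((1 : ℤ) - n)) x

/-- `F ⊆ ℝ^{n+1}` is `n`-AD-regular with constant `C₀`. -/
def ADRegular (n : ℕ) (C₀ : ℝ) (F : Set (Euc (n+1))) : Prop :=
  ∀ x ∈ F, ∀ r : ℝ, 0 < r → ENNReal.ofReal r ≤ EMetric.diam F →
    ENNReal.ofReal (C₀⁻¹ * r ^ n) ≤ μH[n] (F ∩ ball x r) ∧
      μH[n] (F ∩ ball x r) ≤ ENNReal.ofReal (C₀ * r ^ n)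

/-- A `λ`-carrot curve from `x` to `y` in `Ω`: a curve `γ ⊆ Ω ∪ {y}` with endpoints `x`
and `y` such that `dist(z, ∂Ω) ≥ λ ⋅ ℋ¹(γ(y,z))` for every point `z = γ(t)` of the curve,
where `γ(y,z)` is the arc of `γ` between `y` and `z`. -/
def CarrotCurve {d : ℕ} (Ω : Set (Euc d)) (lam : ℝ) (x y : Euc d) : Prop :=
  ∃ γ : ℝ → Euc d, ContinuousOn γ (Icc 0 1) ∧ γ 0 = x ∧ γ 1 = y ∧
    γ '' Icc 0 1 ⊆ Ω ∪ {y} ∧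
    ∀ t ∈ Icc (0:ℝ) 1,
      ENNReal.ofReal lam * μH[1] (γ '' Icc t 1) ≤
        ENNReal.ofReal (infDist (γ t) (frontier Ω))

/-- A `C`-good Harnack chain from `x ∈ Ω` to `y ∈ cl Ω`, all of whose balls are moreover
contained in the set `W`: consecutive balls meet, each ball has radius comparable (with
constant `C`) to its distance to `∂Ω`, radii are quasi-monotone, and for each `t > 0`
there are at most `C` balls of radius in `(t, 2t]`.  If `y ∈ Ω` the chain is finite and
`y` lies in its last ball; if `y ∈ ∂Ω` the chain is infinite and the balls converge
to `y`. -/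
def GoodChainIn {d : ℕ} (Ω W : Set (Euc d)) (C : ℝ) (x y : Euc d) : Prop :=
  (y ∈ Ω ∧ ∃ (N : ℕ) (c : ℕ → Euc d) (r : ℕ → ℝ),
    x ∈ ball (c 0) (r 0) ∧ y ∈ ball (c N) (r N) ∧
    (∀ j ≤ N, 0 < r j ∧ ball (c j) (r j) ⊆ Ω ∩ W) ∧
    (∀ j < N, (ball (c j) (r j) ∩ ball (c (j+1)) (r (j+1))).Nonempty) ∧
    (∀ j ≤ N, C⁻¹ * setD (ball (c j) (r j)) (frontier Ω) ≤ r j ∧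
      r j ≤ C * setD (ball (c j) (r j)) (frontier Ω)) ∧
    (∀ i j, i ≤ N → j ≤ N → i < j → r j ≤ C * r i) ∧
    (∀ t : ℝ, 0 < t →
      {j | j ≤ N ∧ t < r j ∧ r j ≤ 2 * t}.Finite ∧
      (Nat.card {j | j ≤ N ∧ t < r j ∧ r j ≤ 2 * t} : ℝ) ≤ C))
  ∨ (y ∈ frontier Ω ∧ ∃ (c : ℕ → Euc d) (r : ℕ → ℝ),
    x ∈ ball (c 0) (r 0) ∧
    Filter.Tendsto (fun j => infDist y (ball (c j) (r j))) atTop (nhds 0) ∧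
    (∀ j, 0 < r j ∧ ball (c j) (r j) ⊆ Ω ∩ W) ∧
    (∀ j, (ball (c j) (r j) ∩ ball (c (j+1)) (r (j+1))).Nonempty) ∧
    (∀ j, C⁻¹ * setD (ball (c j) (r j)) (frontier Ω) ≤ r j ∧
      r j ≤ C * setD (ball (c j) (r j)) (frontier Ω)) ∧
    (∀ i j : ℕ, i < j → r j ≤ C * r i) ∧
    (∀ t : ℝ, 0 < t →
      {j | t < r j ∧ r j ≤ 2 * t}.Finite ∧
      (Nat.card {j | t < r j ∧ r j ≤ 2 * t} : ℝ) ≤ C))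

/-- A `C`-good Harnack chain from `x` to `y`. -/
def GoodChain {d : ℕ} (Ω : Set (Euc d)) (C : ℝ) (x y : Euc d) : Prop :=
  GoodChainIn Ω Set.univ C x y


/-- The harmonic measure of the open set `Ω` satisfies the weak-`A∞` condition: for every
`ε₀ ∈ (0,1)` there is `δ₀ ∈ (0,1)` such that for every ball `B` centered on `∂Ω`, every
pole `p ∈ Ω \ 4B` and every Borel `E ⊆ B ∩ ∂Ω`, `ℋⁿ(E) ≤ δ₀ ℋⁿ(B ∩ ∂Ω)` implies
`ω^p(E) ≤ ε₀ ω^p(2B)`. -/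
def WeakAInfty (n : ℕ) (Ω : Set (Euc (n+1))) : Prop :=
  ∀ ε₀ ∈ Set.Ioo (0:ℝ) 1, ∃ δ₀ ∈ Set.Ioo (0:ℝ) 1,
    ∀ x₀ ∈ frontier Ω, ∀ r₀ : ℝ, 0 < r₀ →
      ∀ p ∈ Ω \ closedBall x₀ (4 * r₀),
        ∀ A : Set (Euc (n+1)), MeasurableSet A → A ⊆ ball x₀ r₀ ∩ frontier Ω →
          μH[n] A ≤ ENNReal.ofReal δ₀ * μH[n] (ball x₀ r₀ ∩ frontier Ω) →
          hMeasure Ω p A ≤ ε₀ * hMeasure Ω p (ball x₀ (2 * r₀))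

/-- `ω^p` satisfies the weak-`A∞` condition in the ball `B(x₀,r₀)`, with gauge `D`
(i.e. `δ₀ = D ε₀` is a witness for each `ε₀ ∈ (0,1)`). -/
def WeakAInftyBallWith (n : ℕ) (Ω : Set (Euc (n+1))) (p x₀ : Euc (n+1)) (r₀ : ℝ)
    (D : ℝ → ℝ) : Prop :=
  ∀ ε₀ ∈ Set.Ioo (0:ℝ) 1, D ε₀ ∈ Set.Ioo (0:ℝ) 1 ∧
    ∀ A : Set (Euc (n+1)), MeasurableSet A → A ⊆ ball x₀ r₀ ∩ frontier Ω →
      μH[n] A ≤ ENNReal.ofReal (D ε₀) * μH[n] (ball x₀ r₀ ∩ frontier Ω) →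
      hMeasure Ω p A ≤ ε₀ * hMeasure Ω p (ball x₀ (2 * r₀))

/-- The weak local John condition for `Ω ⊆ ℝ^{n+1}`: there are `λ, θ ∈ (0,1)` and `Λ ≥ 2`
such that every `x ∈ Ω` sees (through `λ`-carrot curves) a Borel subset `F` of
`B(x, Λ δ_Ω(x)) ∩ ∂Ω` of surface measure at least `θ ℋⁿ(B(x, Λ δ_Ω(x)) ∩ ∂Ω)`. -/
def WeakLocalJohn (n : ℕ) (Ω : Set (Euc (n+1))) : Prop :=
  ∃ lam ∈ Set.Ioo (0:ℝ) 1, ∃ θ ∈ Set.Ioo (0:ℝ) 1, ∃ Λ : ℝ, 2 ≤ Λ ∧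
    ∀ x ∈ Ω, ∃ F : Set (Euc (n+1)), MeasurableSet F ∧
      F ⊆ ball x (Λ * infDist x (frontier Ω)) ∩ frontier Ω ∧
      ENNReal.ofReal θ * μH[n] (ball x (Λ * infDist x (frontier Ω)) ∩ frontier Ω) ≤
        μH[n] F ∧
      ∀ y ∈ F, CarrotCurve Ω lam x y

/-- The corkscrew condition for `Ω`. -/
def CorkscrewCond {d : ℕ} (Ω : Set (Euc d)) : Prop :=
  ∃ c > (0:ℝ), ∀ x ∈ frontier Ω, ∀ ρ : ℝ, 0 < ρ → ENNReal.ofReal ρ ≤ EMetric.diam Ω →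
    ∃ (y : Euc d) (r : ℝ), c * ρ ≤ r ∧ ball y r ⊆ ball x ρ ∩ Ω

/-- `F ⊆ ℝ^{n+1}` is uniformly `n`-rectifiable, with AD-regularity constant `C₀` and
big-pieces-of-Lipschitz-images constants `θ`, `M`. -/
def UnifRectifiable (n : ℕ) (C₀ θ M : ℝ) (F : Set (Euc (n+1))) : Prop :=
  ADRegular n C₀ F ∧ 0 < θ ∧ 0 < M ∧
    ∀ x ∈ F, ∀ r : ℝ, 0 < r → ENNReal.ofReal r ≤ EMetric.diam F →
      ∃ g : Euc n → Euc (n+1), LipschitzOnWith (Real.toNNReal M) g (ball 0 r) ∧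
        ENNReal.ofReal (θ * r ^ n) ≤ μH[n] (F ∩ ball x r ∩ g '' ball 0 r)

/-- The set `WA(p,Λ)` of boundary points `x ∈ B(p, 10 δ_Ω(p)) ∩ ∂Ω` at which the harmonic
measure `ω^p` is comparable (with constant `Λ`) to the normalized surface measure
`μ(B(x,r))/μ(B(x,δ_Ω(p)))` at every scale `0 < r ≤ δ_Ω(p)`. -/
def WAset (n : ℕ) (Ω : Set (Euc (n+1))) (p : Euc (n+1)) (Λ : ℝ) : Set (Euc (n+1)) :=
  {x | x ∈ ball p (10 * infDist p (frontier Ω)) ∩ frontier Ω ∧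
    ∀ r : ℝ, 0 < r → r ≤ infDist p (frontier Ω) →
      Λ⁻¹ * ((μH[n] (frontier Ω ∩ ball x r)).toReal /
          (μH[n] (frontier Ω ∩ ball x (infDist p (frontier Ω)))).toReal) ≤
        hMeasure Ω p (ball x r) ∧
      hMeasure Ω p (ball x r) ≤
        Λ * ((μH[n] (frontier Ω ∩ ball x r)).toReal /
          (μH[n] (frontier Ω ∩ ball x (infDist p (frontier Ω)))).toReal)}


/-- A David–Semmes dyadic lattice associated to a measure `μ` supported on the set `F`,
with comparability constant `Cl`: for each generation `j ∈ ℤ` a partition of `F` into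
Borel "cubes" of side length `2^{-j}`, nested across generations, with
`diam Q ≤ ℓ(Q)`, `μ(Q) ≈ ℓ(Q)ⁿ`, centers deep inside the cubes, and small boundaries. -/
structure DSLattice (n : ℕ) (F : Set (Euc (n+1))) (μ : Measure (Euc (n+1))) (Cl : ℝ) where
  cube : ℤ → Set (Set (Euc (n+1)))
  center : Set (Euc (n+1)) → Euc (n+1)
  one_le_Cl : 1 ≤ Cl
  subset_F : ∀ j, ∀ Q ∈ cube j, Q ⊆ F
  nonempty : ∀ j, ∀ Q ∈ cube j, Q.Nonempty
  measurableSet : ∀ j, ∀ Q ∈ cube j, MeasurableSet Q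
  cover : ∀ j : ℤ, ENNReal.ofReal ((2:ℝ) ^ (-j)) ≤ EMetric.diam F →
    ∀ x ∈ F, ∃ Q ∈ cube j, x ∈ Q
  disj : ∀ j, ∀ Q ∈ cube j, ∀ Q' ∈ cube j, Q ≠ Q' → Disjoint Q Q'
  nested : ∀ j k : ℤ, k ≤ j → ∀ Q ∈ cube j, ∀ Q' ∈ cube k, (Q ∩ Q').Nonempty → Q ⊆ Q'
  diam_le : ∀ j, ∀ Q ∈ cube j, EMetric.diam Q ≤ ENNReal.ofReal ((2:ℝ) ^ (-j))
  measure_lb : ∀ j, ∀ Q ∈ cube j, ENNReal.ofReal (Cl⁻¹ * ((2:ℝ) ^ (-j)) ^ n) ≤ μ Q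
  measure_ub : ∀ j, ∀ Q ∈ cube j, μ Q ≤ ENNReal.ofReal (Cl * ((2:ℝ) ^ (-j)) ^ n)
  center_mem : ∀ j, ∀ Q ∈ cube j, center Q ∈ Q
  center_far : ∀ j, ∀ Q ∈ cube j, ∀ y ∈ F \ Q, Cl⁻¹ * (2:ℝ) ^ (-j) ≤ dist (center Q) y
  small_boundary : ∀ j, ∀ Q ∈ cube j, ∀ τ : ℝ, 0 < τ → τ < 1 →
    μ {x ∈ Q | infDist x (F \ Q) ≤ τ * (2:ℝ) ^ (-j)} +
        μ {x ∈ F \ Q | infDist x Q ≤ τ * (2:ℝ) ^ (-j)} ≤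
      ENNReal.ofReal (Cl * τ ^ (1 / Cl) * ((2:ℝ) ^ (-j)) ^ n)

/-- A cube of the lattice, recorded together with its generation. -/
abbrev Cube (n : ℕ) : Type := ℤ × Set (Euc (n+1))

/-- Membership of a (generation, cube) pair in the lattice. -/
def DSLattice.mem {n : ℕ} {F : Set (Euc (n+1))} {μ : Measure (Euc (n+1))} {Cl : ℝ}
    (L : DSLattice n F μ Cl) (q : Cube n) : Prop := q.2 ∈ L.cube q.1

/-- Side length `ℓ(Q) = 2^{-j}` of a cube of generation `j`. -/
def sideLen {n : ℕ} (q : Cube n) : ℝ := (2:ℝ) ^ (-q.1)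

/-- The ball `t·B_Q = B(z_Q, t · 4 ℓ(Q))` associated to the cube `q`. -/
def cubeBall {n : ℕ} {F : Set (Euc (n+1))} {μ : Measure (Euc (n+1))} {Cl : ℝ}
    (L : DSLattice n F μ Cl) (t : ℝ) (q : Cube n) : Set (Euc (n+1)) :=
  ball (L.center q.2) (t * (4 * sideLen q))

/-- The dilated cube `λQ = {x ∈ F : dist(x,Q) ≤ (λ-1) ℓ(Q)}`. -/
def dilCube {n : ℕ} (F : Set (Euc (n+1))) (lam : ℝ) (q : Cube n) : Set (Euc (n+1)) :=
  {x ∈ F | infDist x q.2 ≤ (lam - 1) * sideLen q}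

/-- The bilateral beta coefficient `bβ_F(B(x,r))`: infimum over affine `n`-planes `L`
meeting `B(x,r)` of `r⁻¹ (sup_{y ∈ F ∩ B} dist(y,L) + sup_{y ∈ L ∩ B} dist(y,F))`. -/
def bbeta (n : ℕ) (F : Set (Euc (n+1))) (x : Euc (n+1)) (r : ℝ) : ℝ :=
  sInf {t | ∃ L : AffineSubspace ℝ (Euc (n+1)),
    Module.finrank ℝ L.direction = n ∧ ((L : Set (Euc (n+1))) ∩ ball x r).Nonempty ∧
    t = r⁻¹ * ((⨆ y ∈ F ∩ ball x r, infDist y (L : Set (Euc (n+1)))) +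
      ⨆ y ∈ (L : Set (Euc (n+1))) ∩ ball x r, infDist y F)}

/-- `q` belongs to `D_μ(R)`: a lattice cube contained in `R` of generation at least that
of `R`. -/
def InD {n : ℕ} {F : Set (Euc (n+1))} {μ : Measure (Euc (n+1))} {Cl : ℝ}
    (L : DSLattice n F μ Cl) (R q : Cube n) : Prop :=
  L.mem q ∧ q.2 ⊆ R.2 ∧ R.1 ≤ q.1

section Corona
variable {n : ℕ} {F : Set (Euc (n+1))} {μ : Measure (Euc (n+1))} {Cl : ℝ}

/-- The harmonic-measure density `ω^p(λQ)/μ(λQ)` of the dilated cube `λQ`. -/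
def dens (Ω : Set (Euc (n+1))) (μ : Measure (Euc (n+1))) (p : Euc (n+1)) (lam : ℝ)
    (q : Cube n) : ℝ :=
  hMeasure Ω p (dilCube (frontier Ω) lam q) / (μ (dilCube (frontier Ω) lam q)).toReal

/-- Being a high density cube (before maximality): `ω^p(2Q)/μ(2Q) ≥ A ω^p(2R₀)/μ(2R₀)`. -/
def HDcond (Ω : Set (Euc (n+1))) (μ : Measure (Euc (n+1))) (L : DSLattice n F μ Cl)
    (p : Euc (n+1)) (R₀ : Cube n) (A : ℝ) (q : Cube n) : Prop :=
  L.mem q ∧ q.2 ⊆ R₀.2 ∧ A * dens Ω μ p 2 R₀ ≤ dens Ω μ p 2 q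

/-- Being a low density cube (before maximality): `ω^p(Q)/μ(Q) ≤ A⁻¹ ω^p(R₀)/μ(R₀)`. -/
def LDcond (Ω : Set (Euc (n+1))) (μ : Measure (Euc (n+1))) (L : DSLattice n F μ Cl)
    (p : Euc (n+1)) (R₀ : Cube n) (A : ℝ) (q : Cube n) : Prop :=
  L.mem q ∧ q.2 ⊆ R₀.2 ∧
    hMeasure Ω p q.2 / (μ q.2).toReal ≤ A⁻¹ * (hMeasure Ω p R₀.2 / (μ R₀.2).toReal)

/-- Maximal cubes of the lattice satisfying a given property. -/
def MaximalWith (L : DSLattice n F μ Cl) (P : Cube n → Prop) (q : Cube n) : Prop :=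
  P q ∧ ∀ q' : Cube n, L.mem q' → q'.1 < q.1 → q.2 ⊆ q'.2 → ¬ P q'

/-- The family `HD` of maximal high density cubes contained in `R₀`. -/
def HDfam (Ω : Set (Euc (n+1))) (μ : Measure (Euc (n+1))) (L : DSLattice n F μ Cl)
    (p : Euc (n+1)) (R₀ : Cube n) (A : ℝ) : Set (Cube n) :=
  {q | MaximalWith L (HDcond Ω μ L p R₀ A) q}

/-- The family `LD` of maximal low density cubes contained in `R₀`. -/
def LDfam (Ω : Set (Euc (n+1))) (μ : Measure (Euc (n+1))) (L : DSLattice n F μ Cl)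
    (p : Euc (n+1)) (R₀ : Cube n) (A : ℝ) : Set (Cube n) :=
  {q | MaximalWith L (LDcond Ω μ L p R₀ A) q}

/-- `B_H`, the union of the high density cubes. -/
def BHset (Ω : Set (Euc (n+1))) (μ : Measure (Euc (n+1))) (L : DSLattice n F μ Cl)
    (p : Euc (n+1)) (R₀ : Cube n) (A : ℝ) : Set (Euc (n+1)) :=
  ⋃ q ∈ HDfam Ω μ L p R₀ A, q.2

/-- `B_L`, the union of the low density cubes. -/
def BLset (Ω : Set (Euc (n+1))) (μ : Measure (Euc (n+1))) (L : DSLattice n F μ Cl)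
    (p : Euc (n+1)) (R₀ : Cube n) (A : ℝ) : Set (Euc (n+1)) :=
  ⋃ q ∈ LDfam Ω μ L p R₀ A, q.2

/-- The family `G` of cubes of `D_μ(R₀)` not contained in any high or low density cube. -/
def Gfam (Ω : Set (Euc (n+1))) (μ : Measure (Euc (n+1))) (L : DSLattice n F μ Cl)
    (p : Euc (n+1)) (R₀ : Cube n) (A : ℝ) : Set (Cube n) :=
  {q | InD L R₀ q ∧
    ∀ q' ∈ HDfam Ω μ L p R₀ A ∪ LDfam Ω μ L p R₀ A, ¬ q.2 ⊆ q'.2}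

/-- `bβ(Q) := bβ_{∂Ω}(100 B_Q)`. -/
def bbetaQ (n : ℕ) {F : Set (Euc (n+1))} {μ : Measure (Euc (n+1))} {Cl : ℝ}
    (L : DSLattice n F μ Cl) (G : Set (Euc (n+1))) (q : Cube n) : ℝ :=
  bbeta n G (L.center q.2) (100 * (4 * sideLen q))

/-- `q'` is the dyadic parent of `q`. -/
def IsParent (L : DSLattice n F μ Cl) (q' q : Cube n) : Prop :=
  L.mem q' ∧ q'.1 = q.1 - 1 ∧ q.2 ⊆ q'.2

/-- The stopping condition for the corona decomposition: `Q ∉ G` or `bβ(Q̂) > ε`. -/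
def StopBad (Ω : Set (Euc (n+1))) (μ : Measure (Euc (n+1))) (L : DSLattice n F μ Cl)
    (p : Euc (n+1)) (R₀ : Cube n) (A ε : ℝ) (q : Cube n) : Prop :=
  q ∉ Gfam Ω μ L p R₀ A ∨ ∃ q', IsParent L q' q ∧ ε < bbetaQ n L (frontier Ω) q'

/-- `Stop(R)`: the maximal cubes of `D_μ(R) \ {R}` satisfying the stopping condition. -/
def StopFam (Ω : Set (Euc (n+1))) (μ : Measure (Euc (n+1))) (L : DSLattice n F μ Cl)
    (p : Euc (n+1)) (R₀ : Cube n) (A ε : ℝ) (R : Cube n) : Set (Cube n) :=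
  {q | L.mem q ∧ q.2 ⊆ R.2 ∧ R.1 < q.1 ∧ StopBad Ω μ L p R₀ A ε q ∧
    ∀ q' : Cube n, L.mem q' → q'.2 ⊆ R.2 → R.1 < q'.1 → q'.1 < q.1 → q.2 ⊆ q'.2 →
      ¬ StopBad Ω μ L p R₀ A ε q'}

/-- `Tree(R)`: the cubes of `D_μ(R)` not contained in any cube from `Stop(R)`. -/
def TreeFam (Ω : Set (Euc (n+1))) (μ : Measure (Euc (n+1))) (L : DSLattice n F μ Cl)
    (p : Euc (n+1)) (R₀ : Cube n) (A ε : ℝ) (R : Cube n) : Set (Cube n) :=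
  {q | InD L R q ∧ ∀ s ∈ StopFam Ω μ L p R₀ A ε R, ¬ q.2 ⊆ s.2}

/-- The generations `Top_k` of the corona decomposition. -/
def TopFam (Ω : Set (Euc (n+1))) (μ : Measure (Euc (n+1))) (L : DSLattice n F μ Cl)
    (p : Euc (n+1)) (R₀ : Cube n) (A ε : ℝ) : ℕ → Set (Cube n)
  | 0 => {q | q ∈ Gfam Ω μ L p R₀ A ∧ q.1 = R₀.1 + 10}
  | (k+1) => {q | ∃ R ∈ TopFam Ω μ L p R₀ A ε k,
      q ∈ StopFam Ω μ L p R₀ A ε R ∧ q ∈ Gfam Ω μ L p R₀ A}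

/-- `Top := ⋃_k Top_k`. -/
def TopAll (Ω : Set (Euc (n+1))) (μ : Measure (Euc (n+1))) (L : DSLattice n F μ Cl)
    (p : Euc (n+1)) (R₀ : Cube n) (A ε : ℝ) : Set (Cube n) :=
  {q | ∃ k : ℕ, q ∈ TopFam Ω μ L p R₀ A ε k}

/-- `Tree^{(N)}(R)`: cubes of `Tree(R)` of side length larger than `2^{-N} ℓ(R₀)`. -/
def TreeN (Ω : Set (Euc (n+1))) (μ : Measure (Euc (n+1))) (L : DSLattice n F μ Cl)
    (p : Euc (n+1)) (R₀ : Cube n) (A ε : ℝ) (N : ℕ) (R : Cube n) : Set (Cube n) :=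
  {q | q ∈ TreeFam Ω μ L p R₀ A ε R ∧ q.1 < R₀.1 + N}

/-- `Top_b^{(N)}`: the cubes `R` of `Top` of side length larger than `2^{-N} ℓ(R₀)` with
`Tree(R) ≠ {R}`. -/
def TopbN (Ω : Set (Euc (n+1))) (μ : Measure (Euc (n+1))) (L : DSLattice n F μ Cl)
    (p : Euc (n+1)) (R₀ : Cube n) (A ε : ℝ) (N : ℕ) : Set (Cube n) :=
  {R | R ∈ TopAll Ω μ L p R₀ A ε ∧ R.1 < R₀.1 + N ∧
    ∃ q ∈ TreeFam Ω μ L p R₀ A ε R, q ≠ R}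

end Corona



lemma integrable_mul_of_supp {d : ℕ} {a b : Euc d → ℝ} {r : ℝ}
    (ha : ContinuousOn a (closedBall 0 r)) (hb : Continuous b)
    (hz : ∀ y, y ∉ closedBall (0 : Euc d) r → b y = 0) : Integrable (fun y => a y * b y) := by
  have h1 : IntegrableOn (fun y => a y * b y) (closedBall (0 : Euc d) r) :=
    (ha.mul hb.continuousOn).integrableOn_compact (isCompact_closedBall _ _)
  exact h1.integrable_of_forall_notMem_eq_zero (fun y hy => by simp [hz y hy])

/-- radial divergence identity -/
lemma radial_div {d : ℕ} {U : Set (Euc d)} {g : Euc d → Euc d}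
    {g' : Euc d → Euc d →L[ℝ] Euc d}
    (hg : ∀ y ∈ U, HasFDerivAt g (g' y) y) (hg'c : ContinuousOn g' U)
    (htr : ∀ y ∈ U, ∑ i, inner ℝ (g' y (EuclideanSpace.basisFun (Fin d) ℝ i))
      (EuclideanSpace.basisFun (Fin d) ℝ i) = 0)
    {x : Euc d} {l r : ℝ} (hl : ∀ y ∈ closedBall (0 : Euc d) r, x + l • y ∈ U)
    {η : ℝ → ℝ} (hη : Continuous η) (hη0 : ∀ s, r ^ 2 ≤ s → η s = 0) (hr : 0 < r) :
    ∫ y : Euc d, inner ℝ (g (x + l • y)) y * η (‖y‖ ^ 2) = 0 := by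
  set e := EuclideanSpace.basisFun (Fin d) ℝ with he
  have hgc : ContinuousOn g U := fun y hy => (hg y hy).continuousAt.continuousWithinAt
  set Θ : ℝ → ℝ := fun s => (1/2) * ∫ t in (r^2)..s, η t with hΘ
  have hΘd : ∀ s, HasDerivAt Θ ((1/2) * η s) s := fun s =>
    (intervalIntegral.integral_hasDerivAt_right (hη.intervalIntegrable _ _)
      hη.stronglyMeasurable.stronglyMeasurableAtFilter hη.continuousAt).const_mul _
  have hΘ0 : ∀ s, r ^ 2 ≤ s → Θ s = 0 := by
    intro s hs
    simp only [hΘ]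
    rw [intervalIntegral.integral_congr (g := fun _ => 0)]
    · simp
    · intro t ht
      rw [uIcc_of_le hs] at ht
      exact hη0 t ht.1
  set Φ : Euc d → ℝ := fun y => Θ (‖y‖^2) with hΦ
  have hΘc : Continuous Θ := continuous_iff_continuousAt.2 fun s => (hΘd s).continuousAt
  have hΦc : Continuous Φ := hΘc.comp (by fun_prop)
  have hΦd : ∀ y, HasFDerivAt Φ (η (‖y‖^2) • innerSL ℝ y) y := by
    intro y
    have h1 : HasFDerivAt (fun y : Euc d => ‖y‖^2) (2 • (innerSL ℝ y)) y :=
      (hasStrictFDerivAt_norm_sq y).hasFDerivAt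
    have := (hΘd (‖y‖^2)).comp_hasFDerivAt y h1
    refine this.congr_fderiv ?_
    ext v
    simp only [_root_.smul_apply, innerSL_apply_apply, smul_eq_mul, nsmul_eq_mul, Nat.cast_ofNat]
    ring
  have hns : ∀ y, y ∉ closedBall (0 : Euc d) r → r^2 ≤ ‖y‖^2 := by
    intro y hy
    simp at hy
    gcongr
  have hΦ0 : ∀ y, y ∉ closedBall (0 : Euc d) r → Φ y = 0 := fun y hy => hΘ0 _ (hns y hy)
  have hχ0 : ∀ y, y ∉ closedBall (0 : Euc d) r → η (‖y‖^2) = 0 := fun y hy => hη0 _ (hns y hy)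
  have hχc : Continuous fun y : Euc d => η (‖y‖^2) := hη.comp (by fun_prop)
  have hts : tsupport Φ ⊆ closedBall (0 : Euc d) r := by
    apply closure_minimal _ isClosed_closedBall
    intro y hy
    by_contra h
    exact hy (hΦ0 y h)
  have hmap : ContinuousOn (fun y : Euc d => x + l • y) (closedBall 0 r) := by fun_prop
  have hgl : ContinuousOn (fun y => g (x + l • y)) (closedBall 0 r) := hgc.comp hmap hl
  have hg'l : ContinuousOn (fun y => g' (x + l • y)) (closedBall 0 r) := hg'c.comp hmap hl
  have key : ∀ i, ∫ y : Euc d, inner ℝ (g (x + l • y)) (e i) * (η (‖y‖^2) * inner ℝ y (e i))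
      = - ∫ y : Euc d, (l * inner ℝ (g' (x + l • y) (e i)) (e i)) * Φ y := by
    intro i
    have := integral_bilinear_hasFDerivAt_right_eq_neg_left_of_integrable (μ := (volume : Measure (Euc d)))
      (f := fun y : Euc d => inner ℝ (g (x + l • y)) (e i)) (g := Φ)
      (f' := fun y => (innerSL ℝ (e i)).comp ((g' (x + l • y)).comp (l • ContinuousLinearMap.id ℝ _)))
      (g' := fun y => η (‖y‖^2) • innerSL ℝ y) (v := e i) (B := ContinuousLinearMap.mul ℝ ℝ)
      ?_ ?_ ?_ ?_ ?_
    · simp only [ContinuousLinearMap.mul_apply', ContinuousLinearMap.comp_apply, innerSL_apply_apply,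
        _root_.smul_apply, ContinuousLinearMap.id_apply, map_smul, smul_eq_mul] at this
      rw [this]
      congr 1
      apply integral_congr_ae
      filter_upwards with y
      rw [real_inner_comm]
    · simp only [ContinuousLinearMap.mul_apply', ContinuousLinearMap.comp_apply, innerSL_apply_apply,
        _root_.smul_apply, ContinuousLinearMap.id_apply, map_smul]
      refine Integrable.smul l ?_
      apply integrable_mul_of_supp _ hΦc hΦ0
      exact continuousOn_const.inner (hg'l.clm_apply continuousOn_const)
    · simp only [ContinuousLinearMap.mul_apply', innerSL_apply_apply,
        _root_.smul_apply]
      apply integrable_mul_of_supp (r := r) (hgl.inner continuousOn_const) _ _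
      · exact hχc.smul (by fun_prop)
      · intro y hy
        simp [hχ0 y hy]
    · exact integrable_mul_of_supp (hgl.inner continuousOn_const) hΦc hΦ0
    · intro y hy
      have h1 : HasFDerivAt (fun y : Euc d => x + l • y) (l • ContinuousLinearMap.id ℝ _) y :=
        ((hasFDerivAt_id y).const_smul l).const_add x
      have h2 := (hg _ (hl y (hts hy))).comp y h1
      have h3 := (innerSL ℝ (e i)).hasFDerivAt.comp y h2
      refine h3.congr_of_eventuallyEq ?_
      filter_upwards with z
      simp [real_inner_comm]
    · intro y _
      exact hΦd y
  have hsum : ∀ y, inner ℝ (g (x + l • y)) y * η (‖y‖ ^ 2)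
      = ∑ i, inner ℝ (g (x + l • y)) (e i) * (η (‖y‖^2) * inner ℝ y (e i)) := by
    intro y
    rw [← e.sum_inner_mul_inner, Finset.sum_mul]
    refine Finset.sum_congr rfl fun i _ => ?_
    rw [real_inner_comm y (e i)]; ring
  simp_rw [hsum]
  rw [integral_finsetSum]
  · simp_rw [key]
    rw [Finset.sum_neg_distrib, ← integral_finsetSum]
    · rw [neg_eq_zero]
      apply integral_eq_zero_of_ae
      filter_upwards with y
      by_cases hy : y ∈ closedBall (0 : Euc d) r
      · rw [← Finset.sum_mul, ← Finset.mul_sum, htr _ (hl y hy)]; simp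
      · simp [hΦ0 y hy]
    · intro i _
      apply integrable_mul_of_supp _ hΦc hΦ0
      exact continuousOn_const.mul ((hg'l.clm_apply continuousOn_const).inner continuousOn_const)
  · intro i _
    apply integrable_mul_of_supp (r := r) (hgl.inner continuousOn_const) _ _
    · exact hχc.mul (by fun_prop)
    · intro y hy
      simp [hχ0 y hy]


lemma mean_value_weight {d : ℕ} {U : Set (Euc d)} (hU : IsOpen U) {f : Euc d → ℝ} {g : Euc d → Euc d}
    {g' : Euc d → Euc d →L[ℝ] Euc d}
    (hf : ∀ y ∈ U, HasFDerivAt f (innerSL ℝ (g y)) y)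
    (hg : ∀ y ∈ U, HasFDerivAt g (g' y) y) (hg'c : ContinuousOn g' U)
    (htr : ∀ y ∈ U, ∑ i, inner ℝ (g' y (EuclideanSpace.basisFun (Fin d) ℝ i))
      (EuclideanSpace.basisFun (Fin d) ℝ i) = 0)
    {x : Euc d} {r : ℝ} (hr : 0 < r) (hxr : closedBall x r ⊆ U)
    {η : ℝ → ℝ} (hη : Continuous η) (hη0 : ∀ s, r ^ 2 ≤ s → η s = 0) :
    ∫ y : Euc d, f (x + y) * η (‖y‖ ^ 2) = ∫ y : Euc d, f x * η (‖y‖ ^ 2) := by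
  have hgc : ContinuousOn g U := fun y hy => (hg y hy).continuousAt.continuousWithinAt
  have hfc : ContinuousOn f U := fun y hy => (hf y hy).continuousAt.continuousWithinAt
  obtain ⟨δ, hδ, hδU⟩ := (isCompact_closedBall x r).exists_cthickening_subset_open hU hxr
  rw [cthickening_closedBall hδ.le hr.le] at hδU
  set R := δ + r with hR
  have hrR : r < R := by linarith
  set s : Set ℝ := Ioo (-(R / r)) (R / r) with hs
  have hR0 : 0 < R := by linarith
  have h1s : (1 : ℝ) ∈ s := ⟨by have : 0 < R / r := by positivity
                                linarith, by rw [lt_div_iff₀ hr]; linarith⟩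
  have h0s : (0 : ℝ) ∈ s := by
    have : 0 < R / r := by positivity
    exact ⟨by linarith, this⟩
  have hsm : ∀ l ∈ s, ∀ y ∈ closedBall (0 : Euc d) r, x + l • y ∈ closedBall x R := by
    intro l hl y hy
    simp only [mem_closedBall, dist_eq_norm, add_sub_cancel_left, sub_zero] at *
    rw [norm_smul, Real.norm_eq_abs]
    have : |l| ≤ R / r := abs_le.2 ⟨hl.1.le, hl.2.le⟩
    calc |l| * ‖y‖ ≤ (R / r) * r := by gcongr
      _ = R := by field_simp
  obtain ⟨M, hM⟩ := (isCompact_closedBall x R).exists_bound_of_continuousOn (hgc.mono hδU)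
  have hχc : Continuous fun y : Euc d => η (‖y‖^2) := hη.comp (by fun_prop)
  have hχ0 : ∀ y, y ∉ closedBall (0 : Euc d) r → η (‖y‖^2) = 0 := by
    intro y hy
    apply hη0
    simp at hy
    gcongr
  have hIntg : ∀ l ∈ s, Integrable fun y : Euc d => f (x + l • y) * η (‖y‖^2) := by
    intro l hl
    refine integrable_mul_of_supp (r := r) ?_ hχc hχ0
    exact (hfc.mono hδU).comp (by fun_prop) (hsm l hl)
  have hIntg' : ∀ l ∈ s, Integrable fun y : Euc d => inner ℝ (g (x + l • y)) y * η (‖y‖^2) := by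
    intro l hl
    refine integrable_mul_of_supp (r := r) ?_ hχc hχ0
    exact ((hgc.mono hδU).comp (by fun_prop) (hsm l hl)).inner continuousOn_id
  have hA : ∀ l ∈ s, HasDerivAt (fun l : ℝ => ∫ y : Euc d, f (x + l • y) * η (‖y‖^2)) 0 l := by
    intro l hl
    have := (hasDerivAt_integral_of_dominated_loc_of_deriv_le (μ := (volume : Measure (Euc d)))
      (F := fun l y => f (x + l • y) * η (‖y‖^2)) (x₀ := l) (s := s)
      (F' := fun l y => inner ℝ (g (x + l • y)) y * η (‖y‖^2))
      (bound := fun y => M * r * |η (‖y‖^2)|)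
      (isOpen_Ioo.mem_nhds hl) ?_ (hIntg l hl) (hIntg' l hl).aestronglyMeasurable ?_ ?_ ?_).2
    · rwa [radial_div hg hg'c htr (fun y hy => hδU (hsm l hl y hy)) hη hη0 hr] at this
    · filter_upwards [isOpen_Ioo.mem_nhds hl] with l' hl'
      exact (hIntg l' hl').aestronglyMeasurable
    · filter_upwards with y l' hl'
      by_cases hy : y ∈ closedBall (0 : Euc d) r
      · rw [norm_mul, Real.norm_eq_abs (η _)]
        have h1 := hM _ (hsm l' hl' y hy)
        have h2 : ‖y‖ ≤ r := by simpa using hy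
        have h0 : 0 ≤ M := (norm_nonneg _).trans h1
        gcongr
        calc ‖inner ℝ (g (x + l' • y)) y‖ ≤ ‖g (x + l' • y)‖ * ‖y‖ := norm_inner_le_norm _ _
          _ ≤ M * r := by gcongr
      · simp [hχ0 y hy]
    · refine integrable_mul_of_supp (r := r) (a := fun _ => M * r) continuousOn_const hχc.abs ?_
      intro y hy
      simp [hχ0 y hy]
    · filter_upwards with y l' hl'
      by_cases hy : y ∈ closedBall (0 : Euc d) r
      · refine HasDerivAt.mul_const ?_ _
        have h1 : HasDerivAt (fun l : ℝ => x + l • y) y l' := by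
          simpa using ((hasDerivAt_id l').smul_const y).const_add x
        exact (hf _ (hδU (hsm l' hl' y hy))).comp_hasDerivAt l' h1
      · simp [hχ0 y hy, hasDerivAt_const]
  have := isOpen_Ioo.is_const_of_deriv_eq_zero (f := fun l : ℝ => ∫ y : Euc d, f (x + l • y) * η (‖y‖^2))
    (s := s) isPreconnected_Ioo (fun l hl => (hA l hl).differentiableAt.differentiableWithinAt)
    (fun l hl => (hA l hl).deriv) h1s h0s
  simpa using this

lemma setAverage_ball_translate {d : ℕ} (f : Euc d → ℝ) (x : Euc d) (r : ℝ) :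
    ∫ y in ball x r, f y = ∫ y in ball (0 : Euc d) r, f (x + y) := by
  have h := (measurePreserving_add_left (volume : Measure (Euc d)) x).setIntegral_preimage_emb
    (MeasurableEquiv.addLeft x).measurableEmbedding f (ball x r)
  rw [← h]
  congr 2
  simp

lemma mean_value {d : ℕ} {U : Set (Euc d)} (hU : IsOpen U) {f : Euc d → ℝ} {g : Euc d → Euc d}
    {g' : Euc d → Euc d →L[ℝ] Euc d}
    (hf : ∀ y ∈ U, HasFDerivAt f (innerSL ℝ (g y)) y)
    (hg : ∀ y ∈ U, HasFDerivAt g (g' y) y) (hg'c : ContinuousOn g' U)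
    (htr : ∀ y ∈ U, ∑ i, inner ℝ (g' y (EuclideanSpace.basisFun (Fin d) ℝ i))
      (EuclideanSpace.basisFun (Fin d) ℝ i) = 0)
    {x : Euc d} {r : ℝ} (hr : 0 < r) (hxr : closedBall x r ⊆ U) :
    f x = ⨍ y in ball x r, f y := by
  have hfc : ContinuousOn f U := fun y hy => (hf y hy).continuousAt.continuousWithinAt
  set η : ℕ → ℝ → ℝ := fun k s => Real.smoothTransition (k * (r^2 - s)) with hη
  have hηc : ∀ k, Continuous (η k) := fun k => Real.smoothTransition.continuous.comp (by fun_prop)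
  have hη0 : ∀ k s, r ^ 2 ≤ s → η k s = 0 := by
    intro k s hs
    apply Real.smoothTransition.zero_of_nonpos
    exact mul_nonpos_of_nonneg_of_nonpos (by positivity) (by linarith)
  have hlim : ∀ F : Euc d → ℝ, ContinuousOn F (closedBall 0 r) →
      Tendsto (fun k => ∫ y : Euc d, F y * η k (‖y‖^2)) atTop (𝓝 (∫ y in ball 0 r, F y)) := by
    intro F hF
    rw [← integral_indicator measurableSet_ball]
    refine tendsto_integral_of_dominated_convergence ((closedBall (0 : Euc d) r).indicator fun y => ‖F y‖)
      ?_ ?_ ?_ ?_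
    · intro k
      refine (integrable_mul_of_supp (r := r) hF ((hηc k).comp (by fun_prop)) ?_).aestronglyMeasurable
      intro y hy
      apply hη0
      simp at hy
      nlinarith
    · rw [integrable_indicator_iff measurableSet_closedBall]
      exact hF.norm.integrableOn_compact (isCompact_closedBall _ _)
    · intro k
      filter_upwards with y
      by_cases hy : y ∈ closedBall (0 : Euc d) r
      · rw [indicator_of_mem hy, norm_mul]
        apply mul_le_of_le_one_right (norm_nonneg _)
        rw [Real.norm_eq_abs, abs_of_nonneg (Real.smoothTransition.nonneg _)]
        exact Real.smoothTransition.le_one _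
      · rw [indicator_of_notMem hy, hη0, mul_zero, norm_zero]
        simp at hy
        gcongr
    · filter_upwards with y
      by_cases hy : y ∈ ball (0 : Euc d) r
      · rw [indicator_of_mem hy]
        apply tendsto_const_nhds.congr'
        have hpos : 0 < r^2 - ‖y‖^2 := by
          simp at hy
          have : ‖y‖^2 < r^2 := by gcongr
          linarith
        obtain ⟨N, hN⟩ := exists_nat_ge (1 / (r^2 - ‖y‖^2))
        filter_upwards [eventually_ge_atTop N] with k hk
        rw [hη]
        simp only
        rw [Real.smoothTransition.one_of_one_le, mul_one]
        rw [← div_le_iff₀ hpos]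
        exact hN.trans (by exact_mod_cast hk)
      · rw [indicator_of_notMem hy]
        apply tendsto_const_nhds.congr
        intro k
        rw [hη0, mul_zero]
        simp at hy
        gcongr
  have h1 := hlim (fun y => f (x + y)) ((hfc.mono hxr).comp (by fun_prop) (fun y hy => by simpa using hy))
  have h2 := hlim (fun _ => f x) continuousOn_const
  have h3 : ∫ y in ball (0 : Euc d) r, f (x + y) = ∫ y in ball (0 : Euc d) r, f x := by
    refine tendsto_nhds_unique h1 (h2.congr fun k => ?_)
    exact (mean_value_weight hU hf hg hg'c htr hr hxr (hηc k) (hη0 k)).symm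
  rw [setAverage_eq, setAverage_ball_translate, h3, setIntegral_const, smul_smul]
  have : volume.real (ball x r) = volume.real (ball (0 : Euc d) r) := by
    rw [measureReal_def, measureReal_def, Measure.addHaar_ball_center]
  rw [this, inv_mul_cancel₀, one_smul]
  exact (ENNReal.toReal_pos (measure_ball_pos _ _ hr).ne' measure_ball_lt_top.ne).ne'



/-- power of the squared distance to `ξ` -/
def vpow {d : ℕ} (a : ℝ) (ξ x : Euc d) : ℝ := (‖x - ξ‖ ^ 2) ^ a

lemma vpow_fderiv {d : ℕ} (a : ℝ) {ξ x : Euc d} (h : x ≠ ξ) :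
    HasFDerivAt (vpow a ξ) ((2 * a * vpow (a - 1) ξ x) • innerSL ℝ (x - ξ)) x := by
  have hz : ‖x - ξ‖ ^ 2 ≠ 0 := by
    have : x - ξ ≠ 0 := sub_ne_zero.2 h
    positivity
  have h1 : HasFDerivAt (fun y : Euc d => ‖y - ξ‖^2) (2 • (innerSL ℝ (x - ξ))) x := by
    have := ((hasStrictFDerivAt_norm_sq (x - ξ)).hasFDerivAt).comp x
      ((hasFDerivAt_id x).sub_const ξ)
    exact this
  have h2 := (Real.hasDerivAt_rpow_const (p := a) (Or.inl hz)).comp_hasFDerivAt x h1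
  refine h2.congr_fderiv ?_
  ext v
  simp only [_root_.smul_apply, innerSL_apply_apply, smul_eq_mul, nsmul_eq_mul, Nat.cast_ofNat, vpow]
  ring

lemma vpow_succ {d : ℕ} (a : ℝ) {ξ x : Euc d} (h : x ≠ ξ) :
    vpow (a - 1) ξ x * ‖x - ξ‖ ^ 2 = vpow a ξ x := by
  have hz : 0 < ‖x - ξ‖ ^ 2 := by
    have : x - ξ ≠ 0 := sub_ne_zero.2 h
    positivity
  unfold vpow
  rw [Real.rpow_sub_one hz.ne', div_mul_cancel₀ _ hz.ne']

lemma vpow_contOn {d : ℕ} (a : ℝ) (ξ : Euc d) : ContinuousOn (vpow a ξ) {ξ}ᶜ :=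
  fun _ hx => (vpow_fderiv a hx).continuousAt.continuousWithinAt

lemma contOn_smulRight {d : ℕ} {s : Set (Euc d)} {c : Euc d → (Euc d →L[ℝ] ℝ)} {f : Euc d → Euc d}
    (hc : ContinuousOn c s) (hf : ContinuousOn f s) :
    ContinuousOn (fun x => (c x).smulRight (f x)) s := by
  have h : ContinuousOn (fun x => (ContinuousLinearMap.smulRightL ℝ (Euc d) (Euc d)) (c x) (f x)) s :=
    ((ContinuousLinearMap.smulRightL ℝ (Euc d) (Euc d)).continuous.comp_continuousOn hc).clm_apply hf
  exact h

lemma newton_mean {n : ℕ} {ξ x : Euc (n+1)} {r : ℝ} (hr : 0 < r) (h : closedBall x r ⊆ {ξ}ᶜ) :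
    vpow ((1 - n) / 2) ξ x = ⨍ y in ball x r, vpow ((1 - n) / 2) ξ y := by
  set a : ℝ := (1 - n) / 2 with ha
  refine mean_value (U := {ξ}ᶜ) isOpen_compl_singleton
    (g := fun x => (2 * a * vpow (a - 1) ξ x) • (x - ξ))
    (g' := fun x => (2 * a * vpow (a - 1) ξ x) • ContinuousLinearMap.id ℝ (Euc (n+1)) +
      ((2 * a) • ((2 * (a - 1) * vpow (a - 1 - 1) ξ x) • innerSL ℝ (x - ξ))).smulRight (x - ξ))
    ?_ ?_ ?_ ?_ hr h
  · intro y hy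
    refine (vpow_fderiv a hy).congr_fderiv ?_
    rw [map_smul]
  · intro y hy
    exact ((vpow_fderiv (a - 1) hy).const_mul (2 * a)).smul ((hasFDerivAt_id y).sub_const ξ)
  · have h1 := vpow_contOn (a - 1) ξ
    have h2 := vpow_contOn (a - 1 - 1) ξ
    refine ContinuousOn.add (by fun_prop) (contOn_smulRight ?_ (by fun_prop))
    fun_prop
  · intro y hy
    set e := EuclideanSpace.basisFun (Fin (n+1)) ℝ with he
    have hs : ∑ i, inner ℝ (y - ξ) (e i) * inner ℝ (e i) (y - ξ) = ‖y - ξ‖^2 := by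
      rw [e.sum_inner_mul_inner, real_inner_self_eq_norm_sq]
    have : ∀ i, inner ℝ (((2 * a * vpow (a - 1) ξ y) • ContinuousLinearMap.id ℝ (Euc (n+1)) +
      ((2 * a) • ((2 * (a - 1) * vpow (a - 1 - 1) ξ y) • innerSL ℝ (y - ξ))).smulRight (y - ξ)) (e i)) (e i)
      = (2 * a * vpow (a - 1) ξ y) + (2 * a * (2 * (a - 1) * vpow (a - 1 - 1) ξ y)) *
        (inner ℝ (y - ξ) (e i) * inner ℝ (e i) (y - ξ)) := by
      intro i
      simp only [_root_.add_apply, _root_.smul_apply, ContinuousLinearMap.id_apply,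
        ContinuousLinearMap.smulRight_apply, innerSL_apply_apply, smul_eq_mul, inner_add_left,
        real_inner_smul_left]
      rw [real_inner_self_eq_norm_sq, e.norm_eq_one, real_inner_comm (e i) (y - ξ)]
      ring
    simp_rw [this]
    rw [Finset.sum_add_distrib, Finset.sum_const, ← Finset.mul_sum, hs, ← vpow_succ (a - 1) hy]
    simp [ha]
    ring

/-- Poisson kernel of the unit ball (up to normalization). -/
def pker {n : ℕ} (ζ x : Euc (n+1)) : ℝ := (1 - ‖x‖ ^ 2) * vpow (-(n + 1) / 2) ζ x

lemma pker_mean {n : ℕ} {ζ x : Euc (n+1)} (hζ : ‖ζ‖ = 1) {r : ℝ} (hr : 0 < r)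
    (h : closedBall x r ⊆ {ζ}ᶜ) :
    pker ζ x = ⨍ y in ball x r, pker ζ y := by
  set b : ℝ := -(n + 1) / 2 with hb
  have hns : ∀ y : Euc (n+1), HasFDerivAt (fun y : Euc (n+1) => 1 - ‖y‖^2) (-((2:ℝ) • innerSL ℝ y)) y := by
    intro y
    refine ((hasStrictFDerivAt_norm_sq y).hasFDerivAt.const_sub 1).congr_fderiv ?_
    ext v
    simp [two_mul, two_smul]
  refine mean_value (U := {ζ}ᶜ) isOpen_compl_singleton
    (g := fun x => (-2 * vpow b ζ x) • x + ((2 * b) * ((1 - ‖x‖^2) * vpow (b - 1) ζ x)) • (x - ζ))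
    (g' := fun x => ((-2 * vpow b ζ x) • ContinuousLinearMap.id ℝ (Euc (n+1)) +
      ((-2 : ℝ) • ((2 * b * vpow (b - 1) ζ x) • innerSL ℝ (x - ζ))).smulRight x) +
      (((2 * b) * ((1 - ‖x‖^2) * vpow (b - 1) ζ x)) • ContinuousLinearMap.id ℝ (Euc (n+1)) +
      ((2 * b) • ((1 - ‖x‖^2) • ((2 * (b - 1) * vpow (b - 1 - 1) ζ x) • innerSL ℝ (x - ζ)) +
        vpow (b - 1) ζ x • (-((2:ℝ) • innerSL ℝ x)))).smulRight (x - ζ)))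
    ?_ ?_ ?_ ?_ hr h
  · intro y hy
    refine ((hns y).mul (vpow_fderiv b hy)).congr_fderiv ?_
    rw [map_add, map_smul, map_smul]
    ext v
    simp only [_root_.add_apply, _root_.smul_apply, _root_.neg_apply, innerSL_apply_apply, smul_eq_mul]
    ring
  · intro y hy
    exact (((vpow_fderiv b hy).const_mul (-2)).smul (hasFDerivAt_id y)).add
      ((((hns y).mul (vpow_fderiv (b - 1) hy)).const_mul (2 * b)).smul
        ((hasFDerivAt_id y).sub_const ζ))
  · have h0 := vpow_contOn b ζ
    have h1 := vpow_contOn (b - 1) ζ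
    have h2 := vpow_contOn (b - 1 - 1) ζ
    refine ContinuousOn.add (ContinuousOn.add (by fun_prop) (contOn_smulRight ?_ (by fun_prop)))
      (ContinuousOn.add (by fun_prop) (contOn_smulRight ?_ (by fun_prop)))
    · fun_prop
    · fun_prop
  · intro y hy
    set e := EuclideanSpace.basisFun (Fin (n+1)) ℝ with he
    have hs : ∑ i, inner ℝ (y - ζ) (e i) * inner ℝ (e i) (y - ζ) = ‖y - ζ‖^2 := by
      rw [e.sum_inner_mul_inner, real_inner_self_eq_norm_sq]
    have hs2 : ∑ i, inner ℝ (y - ζ) (e i) * inner ℝ (e i) y = inner ℝ (y - ζ) y :=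
      e.sum_inner_mul_inner _ _
    have : ∀ i, inner ℝ ((((-2 * vpow b ζ y) • ContinuousLinearMap.id ℝ (Euc (n+1)) +
      ((-2 : ℝ) • ((2 * b * vpow (b - 1) ζ y) • innerSL ℝ (y - ζ))).smulRight y) +
      (((2 * b) * ((1 - ‖y‖^2) * vpow (b - 1) ζ y)) • ContinuousLinearMap.id ℝ (Euc (n+1)) +
      ((2 * b) • ((1 - ‖y‖^2) • ((2 * (b - 1) * vpow (b - 1 - 1) ζ y) • innerSL ℝ (y - ζ)) +
        vpow (b - 1) ζ y • (-((2:ℝ) • innerSL ℝ y)))).smulRight (y - ζ))) (e i)) (e i)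
      = (-2 * vpow b ζ y + (2 * b) * ((1 - ‖y‖^2) * vpow (b - 1) ζ y)) +
        (-8 * b * vpow (b - 1) ζ y) *
        (inner ℝ (y - ζ) (e i) * inner ℝ (e i) y) +
        (2 * b * ((1 - ‖y‖^2) * (2 * (b - 1) * vpow (b - 1 - 1) ζ y))) *
        (inner ℝ (y - ζ) (e i) * inner ℝ (e i) (y - ζ)) := by
      intro i
      simp only [_root_.add_apply, _root_.smul_apply, ContinuousLinearMap.id_apply, _root_.neg_apply,
        ContinuousLinearMap.smulRight_apply, innerSL_apply_apply, smul_eq_mul, inner_add_left,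
        real_inner_smul_left]
      rw [real_inner_self_eq_norm_sq, e.norm_eq_one, real_inner_comm (e i) (y - ζ), real_inner_comm (e i) y]
      ring
    simp_rw [this]
    rw [Finset.sum_add_distrib, Finset.sum_add_distrib, ← Finset.mul_sum, ← Finset.mul_sum, hs, hs2]
    have e1 := vpow_succ b hy
    have e2 := vpow_succ (b - 1) hy
    have e3 : ‖y - ζ‖^2 = ‖y‖^2 - 2 * inner ℝ y ζ + 1 := by
      rw [norm_sub_sq_real, hζ]; ring
    have e4 : inner ℝ (y - ζ) y = ‖y‖^2 - inner ℝ y ζ := by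
      rw [inner_sub_left, real_inner_self_eq_norm_sq, real_inner_comm]
    have hd : ((n:ℝ) + 1) = -2 * b := by rw [hb]; ring
    simp only [Finset.sum_const, Finset.card_univ, Fintype.card_fin, nsmul_eq_mul]
    push_cast
    rw [hd, e4, ← e1]
    have e5 : 2 * b * ((1 - ‖y‖ ^ 2) * (2 * (b - 1) * vpow (b - 1 - 1) ζ y)) * ‖y - ζ‖ ^ 2
      = 2 * b * ((1 - ‖y‖ ^ 2) * (2 * (b - 1))) * vpow (b - 1) ζ y := by rw [← e2]; ring
    rw [e5, e3]
    ring



/-- surface measure of the unit sphere -/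
abbrev sig (n : ℕ) : Measure (sphere (0 : Euc (n+1)) 1) := (volume : Measure (Euc (n+1))).toSphere

lemma polar {n : ℕ} {f : Euc (n+1) → ℝ} (hf : Integrable f) :
    ∫ x, f x = ∫ s in Ioi (0:ℝ), s ^ n * ∫ ζ, f (s • (ζ : Euc (n+1))) ∂(sig n) := by
  have hd : Module.finrank ℝ (Euc (n+1)) - 1 = n := by simp
  have mp := (volume : Measure (Euc (n+1))).measurePreserving_homeomorphUnitSphereProd
  rw [hd] at mp
  set h := homeomorphUnitSphereProd (Euc (n+1))
  have hform : ∀ x : ({(0 : Euc (n+1))}ᶜ : Set _), f x = (fun z : sphere (0 : Euc (n+1)) 1 × Ioi (0:ℝ) => f (z.2.1 • z.1.1)) (h x) := by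
    intro x
    have : ((h.symm (h x) : ({(0 : Euc (n+1))}ᶜ : Set _)) : Euc (n+1)) = (h x).2.1 • (h x).1.1 :=
      homeomorphUnitSphereProd_symm_apply_coe _ _
    rw [h.symm_apply_apply] at this
    simp only
    rw [← this]
  have hIntg : Integrable (fun z : sphere (0 : Euc (n+1)) 1 × Ioi (0:ℝ) => f (z.2.1 • z.1.1))
      ((sig n).prod (.volumeIoiPow n)) := by
    rw [← mp.integrable_comp_emb h.measurableEmbedding]
    have : ((fun z : sphere (0 : Euc (n+1)) 1 × Ioi (0:ℝ) => f (z.2.1 • z.1.1)) ∘ h)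
      = fun x : ({(0 : Euc (n+1))}ᶜ : Set _) => f x := by
      funext x; exact (hform x).symm
    rw [this]
    have := (integrableOn_iff_comap_subtypeVal (μ := volume) (f := f)
      (measurableSet_singleton (0 : Euc (n+1))).compl).1 hf.integrableOn
    exact this
  calc ∫ x, f x = ∫ x : ({(0)}ᶜ : Set (Euc (n+1))), f x.1 ∂((volume : Measure (Euc (n+1))).comap Subtype.val) := by
        rw [integral_subtype_comap (measurableSet_singleton _).compl fun x ↦ f x,
          restrict_compl_singleton]
    _ = ∫ z, f (z.2.1 • z.1.1) ∂((sig n).prod (.volumeIoiPow n)) := by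
      rw [← mp.integral_comp h.measurableEmbedding]
      exact integral_congr_ae (Eventually.of_forall hform)
    _ = ∫ s : Ioi (0:ℝ), ∫ ζ, f (s.1 • (ζ : Euc (n+1))) ∂(sig n) ∂(.volumeIoiPow n) :=
      integral_prod_symm _ hIntg
    _ = _ := by
      simp only [Measure.volumeIoiPow, ENNReal.ofReal]
      rw [integral_withDensity_eq_integral_smul,
        integral_subtype_comap measurableSet_Ioi fun a ↦ Real.toNNReal (a ^ n) • ∫ ζ, f (a • (ζ : Euc (n+1))) ∂(sig n),
        setIntegral_congr_fun measurableSet_Ioi fun x hx ↦ ?_]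
      · rw [NNReal.smul_def, Real.coe_toNNReal _ (pow_nonneg hx.out.le _), smul_eq_mul]
      · exact (measurable_subtype_coe.pow_const _).real_toNNReal

/-- spherical integral -/
def sphI {n : ℕ} (f : Euc (n+1) → ℝ) (s : ℝ) : ℝ := ∫ ζ, f (s • (ζ : Euc (n+1))) ∂(sig n)

lemma sphI_continuous {n : ℕ} {f : Euc (n+1) → ℝ} (hf : Continuous f) : Continuous (sphI f) := by
  have := continuous_parametric_integral_of_continuous (μ := sig n)
    (f := fun (s : ℝ) (ζ : sphere (0 : Euc (n+1)) 1) => f (s • (ζ : Euc (n+1)))) (by fun_prop)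
    (isCompact_univ)
  simp only [Measure.restrict_univ] at this
  exact this

lemma integrableOn_ball' {d : ℕ} {f : Euc d → ℝ} {x : Euc d} {r : ℝ}
    (hf : ContinuousOn f (closedBall x r)) : IntegrableOn f (ball x r) :=
  (hf.integrableOn_compact (isCompact_closedBall x r)).mono_set ball_subset_closedBall

lemma polar_ball {n : ℕ} {f : Euc (n+1) → ℝ} (hf : Continuous f) {r : ℝ} (hr : 0 < r) :
    ∫ x in ball 0 r, f x = ∫ s in (0:ℝ)..r, s ^ n * sphI f s := by
  rw [← integral_indicator measurableSet_ball, polar]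
  · rw [intervalIntegral.integral_of_le hr.le, integral_Ioc_eq_integral_Ioo]
    have : Ioo (0:ℝ) r = Iio r ∩ Ioi 0 := by ext; simp [and_comm]
    rw [this, ← Measure.restrict_restrict measurableSet_Iio, ← integral_indicator measurableSet_Iio]
    refine setIntegral_congr_fun measurableSet_Ioi fun s hs => ?_
    have hs : 0 < s := hs
    by_cases h : s < r
    · simp only [mem_Iio, h, indicator_of_mem, sphI]
      congr 1
      refine integral_congr_ae (Eventually.of_forall fun ζ => ?_)
      have : s • (ζ : Euc (n+1)) ∈ ball 0 r := by
        simp [norm_smul, abs_of_pos hs, h]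
      simp [indicator_of_mem this]
    · rw [indicator_of_notMem (by simpa using h)]
      have : ∀ ζ : sphere (0 : Euc (n+1)) 1, (ball 0 r).indicator f (s • (ζ : Euc (n+1))) = 0 := by
        intro ζ
        apply indicator_of_notMem
        simpa [norm_smul, abs_of_pos hs] using h
      simp [this]
  · rw [integrable_indicator_iff measurableSet_ball]
    exact integrableOn_ball' hf.continuousOn

/-- total mass of the unit sphere -/
def sigT (n : ℕ) : ℝ := (sig n).real univ

lemma sigT_pos (n : ℕ) : 0 < sigT n := by
  unfold sigT
  rw [Measure.toSphere_real_apply_univ]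
  have : 0 < (volume : Measure (Euc (n+1))).real (ball 0 1) :=
    ENNReal.toReal_pos (measure_ball_pos _ _ one_pos).ne' measure_ball_lt_top.ne
  have h2 : 0 < Module.finrank ℝ (Euc (n+1)) := by simp
  positivity

lemma volball_pos {d : ℕ} (x : Euc d) {r : ℝ} (hr : 0 < r) :
    0 < (volume : Measure (Euc d)).real (ball x r) :=
  ENNReal.toReal_pos (measure_ball_pos _ _ hr).ne' measure_ball_lt_top.ne

lemma avg_eq {d : ℕ} (f : Euc d → ℝ) (x : Euc d) (r : ℝ) :
    ⨍ y in ball x r, f y = ((volume : Measure (Euc d)).real (ball x r))⁻¹ * ∫ y in ball x r, f y := by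
  rw [setAverage_eq, smul_eq_mul]

lemma avg_sub_const {d : ℕ} {f : Euc d → ℝ} {x : Euc d} {r : ℝ} (hr : 0 < r)
    (hf : ContinuousOn f (closedBall x r)) (c : ℝ) :
    ∫ y in ball x r, (f y - c) = (volume : Measure (Euc d)).real (ball x r) * ((⨍ y in ball x r, f y) - c) := by
  rw [integral_sub (integrableOn_ball' hf) (integrableOn_const measure_ball_lt_top.ne), avg_eq,
    setIntegral_const, mul_sub, ← mul_assoc, mul_inv_cancel₀ (volball_pos x hr).ne', one_mul, smul_eq_mul]

lemma sphI_sub_const {n : ℕ} {f : Euc (n+1) → ℝ} (hf : Continuous f) (c s : ℝ) :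
    sphI (fun x => f x - c) s = sphI f s - sigT n * c := by
  unfold sphI
  rw [integral_sub, integral_const, smul_eq_mul, sigT]
  · exact (by fun_prop : Continuous _).integrable_of_hasCompactSupport (HasCompactSupport.of_compactSpace _)
  · exact integrable_const _

lemma sphI_of_mean {n : ℕ} {f : Euc (n+1) → ℝ} (hf : Continuous f) {r : ℝ}
    (h : ∀ s, 0 < s → s < r → f 0 = ⨍ y in ball 0 s, f y) {s : ℝ} (hs : 0 < s) (hsr : s < r) :
    sphI f s = sigT n * f 0 := by
  have hg : Continuous (fun x => f x - f 0) := by fun_prop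
  have hc : Continuous fun s : ℝ => s ^ n * sphI (fun x => f x - f 0) s := by
    have := sphI_continuous hg
    fun_prop
  have h0 : ∀ t ∈ Ioo 0 r, ∫ s in (0:ℝ)..t, s ^ n * sphI (fun x => f x - f 0) s = 0 := by
    intro t ht
    rw [← polar_ball hg ht.1, avg_sub_const ht.1 hf.continuousOn, ← h t ht.1 ht.2]
    simp
  have hd := (hc.integral_hasStrictDerivAt 0 s).hasDerivAt
  have hd0 : HasDerivAt (fun u => ∫ x in (0:ℝ)..u, x ^ n * sphI (fun x => f x - f 0) x) 0 s := by
    refine (hasDerivAt_const s (0:ℝ)).congr_of_eventuallyEq ?_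
    filter_upwards [Ioo_mem_nhds hs hsr] with t ht using h0 t ht
  have := hd.unique hd0
  rw [sphI_sub_const hf] at this
  have h3 := (mul_eq_zero.1 this).resolve_left (by positivity)
  linarith

lemma mean_of_sphI_le {n : ℕ} {f : Euc (n+1) → ℝ} (hf : Continuous f) {r : ℝ} (hr : 0 < r)
    (h : ∀ s, 0 < s → s < r → sphI f s ≤ sigT n * f 0) :
    ⨍ y in ball 0 r, f y ≤ f 0 := by
  have hg : Continuous (fun x => f x - f 0) := by fun_prop
  have hc : Continuous fun s : ℝ => s ^ n * sphI (fun x => f x - f 0) s := by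
    have := sphI_continuous hg
    fun_prop
  have key : ∫ s in (0:ℝ)..r, s ^ n * sphI (fun x => f x - f 0) s ≤ 0 := by
    have h1 : ∫ s in (0:ℝ)..r, s ^ n * sphI (fun x => f x - f 0) s ≤ ∫ s in (0:ℝ)..r, (0:ℝ) := by
      refine intervalIntegral.integral_mono_on_of_le_Ioo hr.le (hc.intervalIntegrable _ _)
        (by simp) ?_
      intro s hs
      rw [sphI_sub_const hf]
      have := h s hs.1 hs.2
      have := pow_pos hs.1 n
      nlinarith
    simpa using h1
  rw [← polar_ball hg hr, avg_sub_const hr hf.continuousOn] at key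
  have := volball_pos (0 : Euc (n+1)) hr
  nlinarith



lemma tietze {d : ℕ} {f : Euc d → ℝ} {s : Set (Euc d)} (hs : IsClosed s) (hf : ContinuousOn f s) :
    ∃ g : Euc d → ℝ, Continuous g ∧ EqOn g f s := by
  obtain ⟨g, hg⟩ := ContinuousMap.exists_restrict_eq hs ⟨s.domRestrict f, hf.domRestrict⟩
  refine ⟨g, g.continuous, fun x hx => ?_⟩
  have := congrArg (fun k : C(s, ℝ) => k ⟨x, hx⟩) hg
  exact this

lemma sphI_of_mean' {n : ℕ} {f : Euc (n+1) → ℝ} (hf : Continuous f) {r : ℝ} (hr : 0 < r)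
    (h : ∀ s, 0 < s → s < r → f 0 = ⨍ y in ball 0 s, f y) :
    sphI f r = sigT n * f 0 := by
  have hc := sphI_continuous hf
  have h1 : Tendsto (sphI f) (𝓝[<] r) (𝓝 (sphI f r)) := (hc.tendsto r).mono_left nhdsWithin_le_nhds
  have h2 : Tendsto (sphI f) (𝓝[<] r) (𝓝 (sigT n * f 0)) := by
    refine tendsto_const_nhds.congr' ?_
    filter_upwards [Ioo_mem_nhdsLT hr] with s hs using (sphI_of_mean hf h hs.1 hs.2).symm
  exact tendsto_nhds_unique h1 h2

lemma avg_congr {d : ℕ} {f g : Euc d → ℝ} {x : Euc d} {r : ℝ} (h : EqOn f g (ball x r)) :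
    ⨍ y in ball x r, f y = ⨍ y in ball x r, g y := by
  rw [avg_eq, avg_eq, setIntegral_congr_fun measurableSet_ball h]

lemma ne_of_ball {d : ℕ} {x ζ : Euc d} (hx : ‖x‖ < 1) (hζ : ‖ζ‖ = 1) : x ≠ ζ := by
  rintro rfl; linarith

lemma pker_zero {n : ℕ} {ζ : Euc (n+1)} (hζ : ‖ζ‖ = 1) : pker ζ 0 = 1 := by
  simp [pker, vpow, hζ]

lemma pker_nonneg {n : ℕ} {ζ x : Euc (n+1)} (hx : ‖x‖ ≤ 1) : 0 ≤ pker ζ x := by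
  unfold pker vpow
  have : 0 ≤ 1 - ‖x‖^2 := by nlinarith [norm_nonneg x]
  positivity

lemma pker_contOn {n : ℕ} {ζ : Euc (n+1)} : ContinuousOn (pker ζ) {ζ}ᶜ := by
  unfold pker
  have := vpow_contOn (-(n + 1) / 2 : ℝ) ζ
  fun_prop

lemma pker_contOn_prod {n : ℕ} :
    ContinuousOn (fun z : Euc (n+1) × sphere (0 : Euc (n+1)) 1 => pker (z.2 : Euc (n+1)) z.1)
      (ball 0 1 ×ˢ univ) := by
  unfold pker vpow
  refine ContinuousOn.mul (by fun_prop) ?_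
  refine ContinuousOn.rpow_const (by fun_prop) ?_
  rintro ⟨x, ζ⟩ h
  left
  have hx : ‖x‖ < 1 := by simpa using h
  have hζ : ‖(ζ : Euc (n+1))‖ = 1 := by simp
  have : x - ζ ≠ 0 := sub_ne_zero.2 (ne_of_ball hx hζ)
  positivity

lemma pker_symm {n : ℕ} {ζ η : Euc (n+1)} (hζ : ‖ζ‖ = 1) (hη : ‖η‖ = 1) (s : ℝ) :
    pker ζ (s • η) = pker η (s • ζ) := by
  have : ‖s • η - ζ‖^2 = ‖s • ζ - η‖^2 := by
    rw [norm_sub_sq_real, norm_sub_sq_real, norm_smul, norm_smul, hζ, hη, real_inner_smul_left,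
      real_inner_smul_left, real_inner_comm]
  simp only [pker, vpow, this, norm_smul, hζ, hη]

lemma pker_int {n : ℕ} {x : Euc (n+1)} (hx : ‖x‖ < 1) :
    ∫ ζ, pker (ζ : Euc (n+1)) x ∂(sig n) = sigT n := by
  by_cases h0 : x = 0
  · subst h0
    have : ∀ ζ : sphere (0 : Euc (n+1)) 1, pker (ζ : Euc (n+1)) 0 = 1 := fun ζ => pker_zero (by simp)
    simp [this, sigT]
  set s := ‖x‖
  have hs : 0 < s := norm_pos_iff.2 h0
  set η := s⁻¹ • x
  have hη : ‖η‖ = 1 := by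
    simp only [η, norm_smul, norm_inv, Real.norm_eq_abs, abs_of_pos hs]
    exact inv_mul_cancel₀ hs.ne'
  have hx' : x = s • η := by simp [η, smul_smul, hs.ne']
  obtain ⟨g, hg, hge⟩ := tietze (f := pker η) (isClosed_closedBall (x := (0 : Euc (n+1))) (ε := s))
    (pker_contOn.mono (fun y hy => ne_of_ball (by simpa using (mem_closedBall_zero_iff.1 hy).trans_lt hx) hη))
  have h1 : ∫ ζ, pker (ζ : Euc (n+1)) x ∂(sig n) = sphI g s := by
    unfold sphI
    refine integral_congr_ae (Eventually.of_forall fun ζ => ?_)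
    simp only
    rw [hx', pker_symm (by simp) hη, hge]
    simp [norm_smul, abs_of_pos hs]
  have hg0 : g 0 = pker η 0 := hge (by simp [hs.le])
  rw [h1, sphI_of_mean' hg hs, hg0, pker_zero hη, mul_one]
  intro t ht hts
  rw [hg0, pker_mean hη ht (fun y hy => ne_of_ball ((mem_closedBall_zero_iff.1 hy).trans_lt (hts.trans hx)) hη)]
  exact avg_congr fun y hy => (hge (ball_subset_closedBall (ball_subset_ball hts.le hy))).symm

/-- Poisson integral on the unit ball, extended by `u` outside. -/
def PI {n : ℕ} (u : Euc (n+1) → ℝ) (x : Euc (n+1)) : ℝ :=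
  if ‖x‖ < 1 then (sigT n)⁻¹ * ∫ ζ, pker (ζ : Euc (n+1)) x * u ζ ∂(sig n) else u x

lemma pker_u_cont {n : ℕ} {u : Euc (n+1) → ℝ} (hu : Continuous u) {x : Euc (n+1)} (hx : ‖x‖ < 1) :
    Continuous (fun ζ : sphere (0 : Euc (n+1)) 1 => pker (ζ : Euc (n+1)) x * u ζ) := by
  refine Continuous.mul ?_ (by fun_prop)
  have := (pker_contOn_prod (n := n)).comp_continuous
    (f := fun ζ : sphere (0 : Euc (n+1)) 1 => (x, ζ)) (by fun_prop) (by intro ζ; simpa using hx)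
  exact this

lemma cont_integrable_sig {n : ℕ} {f : sphere (0 : Euc (n+1)) 1 → ℝ} (hf : Continuous f) :
    Integrable f (sig n) :=
  hf.integrable_of_hasCompactSupport (HasCompactSupport.of_compactSpace _)

lemma PI_mean {n : ℕ} {u : Euc (n+1) → ℝ} (hu : Continuous u) {x : Euc (n+1)} {r : ℝ} (hr : 0 < r)
    (h : closedBall x r ⊆ ball 0 1) : PI u x = ⨍ y in ball x r, PI u y := by
  have hx : ‖x‖ < 1 := by simpa using h (mem_closedBall_self hr.le)
  have hy : ∀ y ∈ ball x r, ‖y‖ < 1 := fun y hy => by simpa using h (ball_subset_closedBall hy)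
  have e1 : ⨍ y in ball x r, PI u y = ⨍ y in ball x r, (sigT n)⁻¹ * ∫ ζ, pker (ζ : Euc (n+1)) y * u ζ ∂(sig n) :=
    avg_congr fun y h => by simp [PI, hy y h]
  rw [e1, avg_eq, integral_const_mul]
  have hIntg : Integrable (fun z : Euc (n+1) × sphere (0 : Euc (n+1)) 1 => pker (z.2 : Euc (n+1)) z.1 * u z.2)
      ((volume.restrict (ball x r)).prod (sig n)) := by
    have hk : IntegrableOn (fun z : Euc (n+1) × sphere (0 : Euc (n+1)) 1 => pker (z.2 : Euc (n+1)) z.1 * u z.2)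
        (closedBall x r ×ˢ univ) (volume.prod (sig n)) := by
      refine ContinuousOn.integrableOn_compact ((isCompact_closedBall x r).prod isCompact_univ) ?_
      exact ContinuousOn.mul (pker_contOn_prod.mono (prod_mono h le_rfl)) (by fun_prop)
    have h2 := hk.mono_set (prod_mono (ball_subset_closedBall (x := x) (ε := r)) (le_refl univ))
    rw [IntegrableOn, ← Measure.prod_restrict, Measure.restrict_univ] at h2
    exact h2
  have hsw := integral_integral_swap (f := fun (y : Euc (n+1)) (ζ : sphere (0 : Euc (n+1)) 1) => pker (ζ : Euc (n+1)) y * u ζ) hIntg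
  rw [hsw]
  have : ∀ ζ : sphere (0 : Euc (n+1)) 1, ∫ y in ball x r, pker (ζ : Euc (n+1)) y * u ζ =
      (volume : Measure (Euc (n+1))).real (ball x r) * (pker (ζ : Euc (n+1)) x * u ζ) := by
    intro ζ
    have hζ : ‖(ζ : Euc (n+1))‖ = 1 := by simp
    have := pker_mean hζ hr (x := x) (fun y hy => ne_of_ball (by simpa using h hy) hζ)
    rw [avg_eq] at this
    rw [integral_mul_const, this]
    have := (volball_pos x hr).ne'
    field_simp
  simp_rw [this]
  rw [integral_const_mul]
  simp only [PI, hx, if_true]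
  have := (volball_pos x hr).ne'
  field_simp

lemma PI_cont {n : ℕ} {u : Euc (n+1) → ℝ} (hu : Continuous u) : Continuous (PI u) := by
  rw [continuous_iff_continuousAt]
  intro x0
  have hsT := sigT_pos n
  rcases lt_trichotomy ‖x0‖ 1 with h | h | h
  · -- interior
    have hev : ∀ᶠ x in 𝓝 x0, ‖x‖ < 1 := (continuous_norm.tendsto x0).eventually (gt_mem_nhds h)
    have : (fun x => (sigT n)⁻¹ * ∫ ζ, pker (ζ : Euc (n+1)) x * u ζ ∂(sig n)) =ᶠ[𝓝 x0] PI u := by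
      filter_upwards [hev] with x hx
      simp [PI, hx]
    refine ContinuousAt.congr ?_ this
    refine ContinuousAt.mul continuousAt_const ?_
    obtain ⟨r, hr, hrs⟩ : ∃ r > 0, closedBall x0 r ⊆ ball 0 1 :=
      Metric.nhds_basis_closedBall.mem_iff.1 (isOpen_ball.mem_nhds (by simpa using h))
    have hcp : ContinuousOn (fun z : Euc (n+1) × sphere (0 : Euc (n+1)) 1 => pker (z.2 : Euc (n+1)) z.1 * u z.2)
        (closedBall x0 r ×ˢ univ) :=
      ContinuousOn.mul (pker_contOn_prod.mono (prod_mono hrs le_rfl)) (by fun_prop)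
    obtain ⟨C, hC⟩ := ((isCompact_closedBall x0 r).prod isCompact_univ).exists_bound_of_continuousOn hcp
    refine continuousAt_of_dominated (bound := fun _ => C) ?_ ?_ (integrable_const _) ?_
    · filter_upwards [hev] with x hx
      exact (pker_u_cont hu hx).aestronglyMeasurable
    · filter_upwards [closedBall_mem_nhds x0 hr] with x hx
      exact Eventually.of_forall fun ζ => hC (x, ζ) ⟨hx, trivial⟩
    · refine Eventually.of_forall fun ζ => ?_
      refine ContinuousAt.mul ?_ continuousAt_const
      exact pker_contOn.continuousAt (isOpen_compl_singleton.mem_nhds (ne_of_ball h (by simp)))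
  · -- boundary
    rw [ContinuousAt, show PI u x0 = u x0 by simp [PI, h], Metric.tendsto_nhds]
    intro ε hε
    obtain ⟨M, hM⟩ := (isCompact_sphere (0 : Euc (n+1)) 1).exists_bound_of_continuousOn hu.continuousOn
    have hM0 : 0 ≤ M := (norm_nonneg _).trans (hM x0 (by simp [h]))
    obtain ⟨δ, hδ, hδu⟩ := Metric.continuousAt_iff.1 (hu.continuousAt (x := x0)) (ε / 2) (by positivity)
    set B : ℝ := 2 * M * ((δ/2)^2) ^ (-(n + 1 : ℝ) / 2) with hB
    have hBt : Tendsto (fun x : Euc (n+1) => B * (1 - ‖x‖^2)) (𝓝 x0) (𝓝 (B * (1 - ‖x0‖^2))) :=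
      (by fun_prop : Continuous _).tendsto _
    rw [h] at hBt
    simp only [one_pow, sub_self, mul_zero] at hBt
    filter_upwards [ball_mem_nhds x0 (show 0 < δ / 2 by positivity), hBt.eventually (gt_mem_nhds (half_pos hε))] with x hxb hxB
    rw [Real.dist_eq]
    have hxδ : dist x x0 < δ / 2 := hxb
    by_cases hx : ‖x‖ < 1
    · have hpt : ∀ ζ : sphere (0 : Euc (n+1)) 1, ‖pker (ζ : Euc (n+1)) x * (u ζ - u x0)‖ ≤
          pker (ζ : Euc (n+1)) x * (ε / 2) + B * (1 - ‖x‖^2) := by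
        intro ζ
        have hp := pker_nonneg (ζ := (ζ : Euc (n+1))) hx.le
        have h1x : 0 ≤ 1 - ‖x‖^2 := by nlinarith [norm_nonneg x]
        have hB0 : 0 ≤ B := by positivity
        rw [norm_mul, Real.norm_of_nonneg hp]
        by_cases hζ : dist (ζ : Euc (n+1)) x0 < δ
        · have := (hδu hζ).le
          rw [Real.dist_eq] at this
          rw [Real.norm_eq_abs]
          nlinarith
        · have hfar : δ / 2 ≤ ‖x - ζ‖ := by
            rw [← dist_eq_norm]
            have := dist_triangle_left (ζ : Euc (n+1)) x0 x
            linarith [not_lt.1 hζ]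
          have hk : pker (ζ : Euc (n+1)) x ≤ (1 - ‖x‖^2) * ((δ/2)^2) ^ (-(n + 1 : ℝ) / 2) := by
            unfold pker vpow
            refine mul_le_mul_of_nonneg_left ?_ h1x
            refine Real.rpow_le_rpow_of_nonpos (by positivity) (by gcongr) ?_
            have : (0:ℝ) ≤ n := Nat.cast_nonneg n
            linarith
          have hu2 : ‖u ζ - u x0‖ ≤ 2 * M := by
            have h1 := hM ζ (by simp)
            have h2 := hM x0 (by simp [h])
            have := norm_sub_le (u ζ) (u x0)
            linarith
          calc pker (ζ : Euc (n+1)) x * ‖u ζ - u x0‖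
              ≤ ((1 - ‖x‖^2) * ((δ/2)^2) ^ (-(n + 1 : ℝ) / 2)) * (2 * M) := by gcongr
            _ = B * (1 - ‖x‖^2) := by rw [hB]; ring
            _ ≤ _ := by nlinarith
      have hpi : Integrable (fun ζ : sphere (0 : Euc (n+1)) 1 => pker (ζ : Euc (n+1)) x) (sig n) := by
        have := cont_integrable_sig (pker_u_cont (continuous_const (y := (1:ℝ))) hx)
        simpa using this
      have e1 : PI u x - u x0 = (sigT n)⁻¹ * ∫ ζ, pker (ζ : Euc (n+1)) x * (u ζ - u x0) ∂(sig n) := by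
        simp only [PI, hx, if_true, mul_sub]
        rw [integral_sub (cont_integrable_sig (pker_u_cont hu hx)) (hpi.mul_const _), integral_mul_const, pker_int hx]
        field_simp
      have e2 : |∫ ζ, pker (ζ : Euc (n+1)) x * (u ζ - u x0) ∂(sig n)| ≤ sigT n * (ε / 2 + B * (1 - ‖x‖^2)) := by
        refine (norm_integral_le_of_norm_le ((hpi.mul_const _).add (integrable_const _)) (Eventually.of_forall hpt)).trans ?_
        simp only [Pi.add_apply]
        rw [integral_add (hpi.mul_const _) (integrable_const _), integral_mul_const, pker_int hx, integral_const,
          smul_eq_mul, ← sigT]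
        linarith
      rw [e1, abs_mul, abs_of_pos (inv_pos.2 hsT)]
      calc _ ≤ (sigT n)⁻¹ * (sigT n * (ε / 2 + B * (1 - ‖x‖^2))) := by gcongr
        _ = ε / 2 + B * (1 - ‖x‖^2) := by field_simp
        _ < ε := by linarith
    · have := hδu (x := x) (by linarith)
      rw [Real.dist_eq] at this
      simp only [PI, hx, if_false]
      linarith
  · have hev : ∀ᶠ x in 𝓝 x0, 1 < ‖x‖ := (continuous_norm.tendsto x0).eventually (lt_mem_nhds h)
    have : u =ᶠ[𝓝 x0] PI u := by
      filter_upwards [hev] with x hx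
      simp [PI, hx.le]
    exact hu.continuousAt.congr this



lemma avg_affine {d : ℕ} (f : Euc d → ℝ) (x x0 : Euc d) {r R : ℝ} (hr : 0 < r) (hR : 0 < R) :
    ⨍ y in ball x r, f (R⁻¹ • (y - x0)) = ⨍ z in ball (R⁻¹ • (x - x0)) (R⁻¹ * r), f z := by
  have hRi : 0 < R⁻¹ := inv_pos.2 hR
  have key : ∀ g : Euc d → ℝ, ∫ y in ball x r, g (R⁻¹ • (y - x0)) =
      ((R⁻¹) ^ d)⁻¹ * ∫ z in ball (R⁻¹ • (x - x0)) (R⁻¹ * r), g z := by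
    intro g
    rw [setAverage_ball_translate, setAverage_ball_translate (x := R⁻¹ • (x - x0))]
    have h1 : ∀ y : Euc d, R⁻¹ • (x + y - x0) = R⁻¹ • (x - x0) + R⁻¹ • y := by
      intro y; rw [← smul_add]; congr 1; abel
    simp_rw [h1]
    have := Measure.setIntegral_comp_smul_of_pos (volume : Measure (Euc d))
      (fun z => g (R⁻¹ • (x - x0) + z)) (ball 0 r) hRi
    rw [this, _root_.smul_ball hRi.ne', smul_zero, Real.norm_of_nonneg hRi.le]
    simp
  have k1 := key (fun _ => 1)
  rw [setIntegral_const, setIntegral_const] at k1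
  simp only [smul_eq_mul, mul_one] at k1
  rw [avg_eq, avg_eq, key f, k1]
  have h1 := (volball_pos (R⁻¹ • (x - x0)) (mul_pos hRi hr)).ne'
  have h2 : (R⁻¹ ^ d) ≠ 0 := by positivity
  field_simp

lemma dirichlet {n : ℕ} (x0 : Euc (n+1)) {R : ℝ} (hR : 0 < R) {u : Euc (n+1) → ℝ} (hu : Continuous u) :
    ∃ h : Euc (n+1) → ℝ, Continuous h ∧ (∀ x ∉ ball x0 R, h x = u x) ∧
      ∀ x r, 0 < r → closedBall x r ⊆ ball x0 R → h x = ⨍ y in ball x r, h y := by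
  have hRi : 0 < R⁻¹ := inv_pos.2 hR
  have hu' : Continuous (fun z => u (x0 + R • z)) := by fun_prop
  refine ⟨fun x => PI (fun z => u (x0 + R • z)) (R⁻¹ • (x - x0)), ?_, ?_, ?_⟩
  · have := PI_cont hu'
    fun_prop
  · intro x hx
    have : ¬ ‖R⁻¹ • (x - x0)‖ < 1 := by
      rw [norm_smul, Real.norm_of_nonneg hRi.le]
      rw [mem_ball, dist_eq_norm] at hx
      intro h
      apply hx
      rwa [inv_mul_lt_iff₀ hR, mul_one] at h
    simp only [PI, this, if_false]
    rw [smul_smul, mul_inv_cancel₀ hR.ne', one_smul, add_sub_cancel]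
  · intro x r hr h
    rw [avg_affine _ x x0 hr hR]
    refine PI_mean hu' (by positivity) ?_
    intro y hy
    have h1 : x0 + R • y ∈ closedBall x r := by
      rw [mem_closedBall, dist_eq_norm] at hy ⊢
      have e : x0 + R • y - x = R • (y - R⁻¹ • (x - x0)) := by
        rw [smul_sub, smul_smul, mul_inv_cancel₀ hR.ne', one_smul]; abel
      rw [e, norm_smul, Real.norm_of_nonneg hR.le]
      calc _ ≤ R * (R⁻¹ * r) := by gcongr
        _ = r := by field_simp
    have h2 := h h1
    rw [mem_ball, dist_eq_norm, add_sub_cancel_left, norm_smul, Real.norm_of_nonneg hR.le] at h2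
    rw [mem_ball_zero_iff]
    nlinarith

lemma avg_le_eqOn {d : ℕ} {w : Euc d → ℝ} {z : Euc d} {r m : ℝ} (hr : 0 < r)
    (hw : ContinuousOn w (closedBall z r)) (hm : ∀ y ∈ ball z r, m ≤ w y)
    (ha : ⨍ y in ball z r, w y ≤ m) : ∀ y ∈ ball z r, w y = m := by
  have h1 := avg_sub_const hr hw m
  have h2 : 0 ≤ᵐ[volume.restrict (ball z r)] fun y => w y - m := by
    filter_upwards [ae_restrict_mem measurableSet_ball] with y hy
    have := hm y hy
    simp only [Pi.zero_apply]; linarith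
  have hIntg : IntegrableOn (fun y => w y - m) (ball z r) :=
    integrableOn_ball' (by fun_prop)
  have h3 : ∫ y in ball z r, (w y - m) = 0 := by
    refine le_antisymm ?_ (integral_nonneg_of_ae h2)
    rw [h1]
    have := volball_pos z hr
    nlinarith
  rw [setIntegral_eq_zero_iff_of_nonneg_ae h2 hIntg] at h3
  have h4 := Measure.eqOn_open_of_ae_eq h3 isOpen_ball
    ((hw.mono ball_subset_closedBall).sub continuousOn_const) continuousOn_const
  intro y hy
  have := h4 hy
  simp at this
  linarith

/-- local super-mean-value property -/
def LocSup {d : ℕ} (w : Euc d → ℝ) (U : Set (Euc d)) : Prop :=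
  ∀ z ∈ U, ∃ r0 > 0, ∀ r, 0 < r → r < r0 → ⨍ y in ball z r, w y ≤ w z

/-- minimum principle on a compact set -/
lemma min_principle' {n : ℕ} {K U : Set (Euc (n+1))} (hK : IsCompact K) (hU : IsOpen U) (hUK : U ⊆ K)
    {w : Euc (n+1) → ℝ} (hw : ContinuousOn w K) (hl : LocSup w U) {c : ℝ}
    (hb : ∀ x ∈ K \ U, c ≤ w x) : ∀ x ∈ K, c ≤ w x := by
  by_contra! hcon
  obtain ⟨x1, hx1, hx1'⟩ := hcon
  obtain ⟨z0, hz0, hz0'⟩ := hK.exists_isMinOn ⟨x1, hx1⟩ hw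
  set m := w z0
  have hm : ∀ y ∈ K, m ≤ w y := fun y hy => hz0' hy
  have hmc : m < c := (hm x1 hx1).trans_lt hx1'
  set S := {z ∈ K | w z = m}
  have hS : IsCompact S := by
    have : S = K ∩ w ⁻¹' {m} := rfl
    rw [this]
    exact hK.of_isClosed_subset (hw.preimage_isClosed_of_isClosed hK.isClosed isClosed_singleton) inter_subset_left
  set e : Euc (n+1) := EuclideanSpace.basisFun (Fin (n+1)) ℝ 0
  have he : ‖e‖ = 1 := (EuclideanSpace.basisFun (Fin (n+1)) ℝ).norm_eq_one 0
  obtain ⟨z, hz, hzmax⟩ := hS.exists_isMaxOn ⟨z0, hz0, rfl⟩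
    (f := fun z => inner ℝ e z) (by fun_prop)
  have hzU : z ∈ U := by
    by_contra h
    have := hb z ⟨hz.1, h⟩
    rw [hz.2] at this
    linarith
  obtain ⟨r0, hr0, hr⟩ := hl z hzU
  obtain ⟨r1, hr1, hr1s⟩ : ∃ r > 0, closedBall z r ⊆ U :=
    Metric.nhds_basis_closedBall.mem_iff.1 (hU.mem_nhds hzU)
  set r := min (r0/2) r1
  have hrp : 0 < r := by positivity
  have hrU : closedBall z r ⊆ U := (closedBall_subset_closedBall (min_le_right _ _)).trans hr1s
  have hrK := hrU.trans hUK
  have h1 := avg_le_eqOn hrp (hw.mono hrK) (fun y hy => hm y (hrK (ball_subset_closedBall hy)))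
    ((hr r hrp ((min_le_left _ _).trans_lt (by linarith))).trans hz.2.le)
  have hy : z + (r/2) • e ∈ ball z r := by
    rw [mem_ball, dist_eq_norm, add_sub_cancel_left, norm_smul, he, Real.norm_of_nonneg (by positivity)]
    linarith
  have h2 : z + (r/2) • e ∈ S := ⟨hrK (ball_subset_closedBall hy), h1 _ hy⟩
  have h3 : inner ℝ e (z + (r/2) • e) ≤ inner ℝ e z := hzmax h2
  rw [inner_add_right, real_inner_smul_right, real_inner_self_eq_norm_sq, he] at h3
  linarith

lemma avg_add {d : ℕ} {f g : Euc d → ℝ} {x : Euc d} {r : ℝ}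
    (hf : ContinuousOn f (closedBall x r)) (hg : ContinuousOn g (closedBall x r)) :
    ⨍ y in ball x r, (f y + g y) = (⨍ y in ball x r, f y) + ⨍ y in ball x r, g y := by
  rw [avg_eq, avg_eq, avg_eq, integral_add (integrableOn_ball' hf) (integrableOn_ball' hg), mul_add]

lemma avg_sub {d : ℕ} {f g : Euc d → ℝ} {x : Euc d} {r : ℝ}
    (hf : ContinuousOn f (closedBall x r)) (hg : ContinuousOn g (closedBall x r)) :
    ⨍ y in ball x r, (f y - g y) = (⨍ y in ball x r, f y) - ⨍ y in ball x r, g y := by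
  rw [avg_eq, avg_eq, avg_eq, integral_sub (integrableOn_ball' hf) (integrableOn_ball' hg), mul_sub]

lemma avg_neg {d : ℕ} (f : Euc d → ℝ) (x : Euc d) (r : ℝ) :
    ⨍ y in ball x r, - f y = - ⨍ y in ball x r, f y := by
  rw [avg_eq, avg_eq, integral_neg, mul_neg]

lemma avg_const_mul {d : ℕ} (c : ℝ) (f : Euc d → ℝ) (x : Euc d) (r : ℝ) :
    ⨍ y in ball x r, c * f y = c * ⨍ y in ball x r, f y := by
  rw [avg_eq, avg_eq, integral_const_mul]; ring

lemma avg_const {d : ℕ} (c : ℝ) (x : Euc d) {r : ℝ} (hr : 0 < r) :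
    ⨍ _ in ball x r, c = c := by
  rw [avg_eq, setIntegral_const, smul_eq_mul, inv_mul_cancel_left₀ (volball_pos x hr).ne']

lemma avg_mono {d : ℕ} {f g : Euc d → ℝ} {x : Euc d} {r : ℝ}
    (hf : ContinuousOn f (closedBall x r)) (hg : ContinuousOn g (closedBall x r))
    (h : ∀ y ∈ ball x r, f y ≤ g y) :
    ⨍ y in ball x r, f y ≤ ⨍ y in ball x r, g y := by
  rw [avg_eq, avg_eq]
  have := setIntegral_mono_on (integrableOn_ball' hf) (integrableOn_ball' hg) measurableSet_ball h
  gcongr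

lemma avg_translate {d : ℕ} (f : Euc d → ℝ) (x : Euc d) (r : ℝ) :
    ⨍ y in ball x r, f y = ⨍ y in ball 0 r, f (x + y) := by
  rw [avg_eq, avg_eq, setAverage_ball_translate, measureReal_def, measureReal_def, Measure.addHaar_ball_center]

lemma superMean_of_local {n : ℕ} {U : Set (Euc (n+1))} {w : Euc (n+1) → ℝ}
    (hw : ContinuousOn w U) (hl : LocSup w U) {x : Euc (n+1)} {r : ℝ} (hr : 0 < r)
    (hx : closedBall x r ⊆ U) : ⨍ y in ball x r, w y ≤ w x := by
  obtain ⟨g, hg, hgw⟩ := tietze (isClosed_closedBall (x := x) (ε := r)) (hw.mono hx)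
  have hlg : LocSup g (ball x r) := by
    intro z hz
    obtain ⟨r0, hr0, h0⟩ := hl z (hx (ball_subset_closedBall hz))
    obtain ⟨r1, hr1, hr1s⟩ : ∃ r' > 0, ball z r' ⊆ ball x r :=
      Metric.isOpen_iff.1 isOpen_ball z hz
    refine ⟨min r0 r1, by positivity, fun s hs hs1 => ?_⟩
    rw [hgw (ball_subset_closedBall hz)]
    refine le_trans (le_of_eq (avg_congr fun y hy => ?_)) (h0 s hs (hs1.trans_le (min_le_left _ _)))
    exact hgw (ball_subset_closedBall (hr1s (ball_subset_ball (hs1.le.trans (min_le_right _ _)) hy)))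
  rw [← hgw (mem_closedBall_self hr.le), ← avg_congr (fun y hy => hgw (ball_subset_closedBall hy)), avg_translate]
  have : g x = (fun y => g (x + y)) 0 := by simp
  rw [this]
  refine mean_of_sphI_le (f := fun y => g (x + y)) (by fun_prop) hr ?_
  intro s hs hsr
  obtain ⟨h, hh, hhg, hhm⟩ := dirichlet x hs hg
  have hle : ∀ y ∈ closedBall x s, 0 ≤ g y - h y := by
    refine min_principle' (isCompact_closedBall x s) isOpen_ball ball_subset_closedBall (by fun_prop) ?_ ?_
    · intro z hz
      obtain ⟨r0, hr0, h0⟩ := hlg z (ball_subset_ball hsr.le hz)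
      obtain ⟨r1, hr1, hr1s⟩ : ∃ r' > 0, closedBall z r' ⊆ ball x s :=
        Metric.nhds_basis_closedBall.mem_iff.1 (isOpen_ball.mem_nhds hz)
      refine ⟨min r0 r1, by positivity, fun t ht ht1 => ?_⟩
      rw [avg_sub (by fun_prop) (by fun_prop), ← hhm z t ht
        ((closedBall_subset_closedBall (ht1.le.trans (min_le_right _ _))).trans hr1s)]
      have := h0 t ht (ht1.trans_le (min_le_left _ _))
      linarith
    · intro y hy
      rw [hhg y hy.2]; simp
  have e1 : sphI (fun y => g (x + y)) s = sphI (fun y => h (x + y)) s := by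
    unfold sphI
    refine integral_congr_ae (Eventually.of_forall fun ζ => ?_)
    simp only
    rw [hhg]
    simp [norm_smul, abs_of_pos hs]
  rw [e1, sphI_of_mean' (by fun_prop) hs]
  · have := hle x (mem_closedBall_self hs.le)
    have h2 := sigT_pos n
    simp only [add_zero]
    nlinarith
  · intro t ht hts
    rw [← avg_translate h]
    simp only [add_zero]
    exact hhm x t ht (closedBall_subset_ball hts)

lemma superharm_of_local {n : ℕ} {U : Set (Euc (n+1))} {w : Euc (n+1) → ℝ}
    (hw : ContinuousOn w U) (hl : LocSup w U) : SubharmonicOn (fun y => - w y) U := by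
  refine ⟨hw.neg, fun x _ r hr hx => ?_⟩
  rw [avg_neg]
  exact neg_le_neg (superMean_of_local hw hl hr hx)

lemma superharm_avg {n : ℕ} {U : Set (Euc (n+1))} {w : Euc (n+1) → ℝ}
    (h : SubharmonicOn (fun y => - w y) U) {x : Euc (n+1)} {r : ℝ} (hr : 0 < r)
    (hx : closedBall x r ⊆ U) : ⨍ y in ball x r, w y ≤ w x := by
  have := h.2 x (hx (mem_closedBall_self hr.le)) r hr hx
  rw [avg_neg] at this
  linarith

lemma superharm_cont {n : ℕ} {U : Set (Euc (n+1))} {w : Euc (n+1) → ℝ}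
    (h : SubharmonicOn (fun y => - w y) U) : ContinuousOn w U := by
  exact h.1.neg.congr fun x _ => by simp

lemma superharm_mk {n : ℕ} {U : Set (Euc (n+1))} {w : Euc (n+1) → ℝ} (hc : ContinuousOn w U)
    (h : ∀ x r, 0 < r → closedBall x r ⊆ U → ⨍ y in ball x r, w y ≤ w x) :
    SubharmonicOn (fun y => - w y) U := by
  refine ⟨hc.neg, fun x _ r hr hx => ?_⟩
  rw [avg_neg]
  exact neg_le_neg (h x r hr hx)



/-- superharmonic -/
def SupH {n : ℕ} (w : Euc (n+1) → ℝ) (U : Set (Euc (n+1))) : Prop := SubharmonicOn (fun y => - w y) U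

section
variable {n : ℕ} {U : Set (Euc (n+1))} {u v w : Euc (n+1) → ℝ}

lemma SupH.cont (h : SupH w U) : ContinuousOn w U := superharm_cont h

lemma SupH.avg (h : SupH w U) {x : Euc (n+1)} {r : ℝ} (hr : 0 < r)
    (hx : closedBall x r ⊆ U) : ⨍ y in ball x r, w y ≤ w x := superharm_avg h hr hx

lemma SupH.mk' (hc : ContinuousOn w U)
    (h : ∀ x r, 0 < r → closedBall x r ⊆ U → ⨍ y in ball x r, w y ≤ w x) : SupH w U :=
  superharm_mk hc h

lemma SupH.const (c : ℝ) : SupH (fun _ => c) U :=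
  SupH.mk' continuousOn_const fun x r hr _ => (avg_const c x hr).le

lemma SupH.add (hu : SupH u U) (hv : SupH v U) : SupH (fun x => u x + v x) U := by
  refine SupH.mk' (hu.cont.add hv.cont) fun x r hr hx => ?_
  rw [avg_add (hu.cont.mono hx) (hv.cont.mono hx)]
  exact add_le_add (hu.avg hr hx) (hv.avg hr hx)

lemma SupH.sub (hu : SupH u U) (hv : SubharmonicOn v U) : SupH (fun x => u x - v x) U := by
  refine SupH.mk' (hu.cont.sub hv.1) fun x r hr hx => ?_
  rw [avg_sub (hu.cont.mono hx) (hv.1.mono hx)]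
  exact sub_le_sub (hu.avg hr hx) (hv.2 x (hx (mem_closedBall_self hr.le)) r hr hx)

lemma SupH.const_mul {c : ℝ} (hc : 0 ≤ c) (hu : SupH u U) : SupH (fun x => c * u x) U := by
  refine SupH.mk' (hu.cont.const_mul c) fun x r hr hx => ?_
  rw [avg_const_mul]
  exact mul_le_mul_of_nonneg_left (hu.avg hr hx) hc

lemma SupH.min (hu : SupH u U) (hv : SupH v U) : SupH (fun x => Min.min (u x) (v x)) U := by
  have hc : ContinuousOn (fun x => Min.min (u x) (v x)) U := hu.cont.inf hv.cont
  refine SupH.mk' hc fun x r hr hx => ?_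
  refine le_min ?_ ?_
  · exact (avg_mono (hc.mono hx) (hu.cont.mono hx) fun y _ => min_le_left _ _).trans (hu.avg hr hx)
  · exact (avg_mono (hc.mono hx) (hv.cont.mono hx) fun y _ => min_le_right _ _).trans (hv.avg hr hx)

lemma SupH.sum {ι : Type*} (s : Finset ι) {f : ι → Euc (n+1) → ℝ} (h : ∀ i ∈ s, SupH (f i) U) :
    SupH (fun x => ∑ i ∈ s, f i x) U := by
  classical
  induction s using Finset.induction_on with
  | empty => simpa using SupH.const 0
  | insert a s ha ih =>
    simp only [Finset.sum_insert ha]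
    exact (h a (by simp)).add (ih fun i hi => h i (by simp [hi]))

lemma SupH.congr (hU : SupH u U) (h : ∀ x ∈ U, v x = u x) : SupH v U := by
  refine SupH.mk' (hU.cont.congr h) fun x r hr hx => ?_
  rw [h x (hx (mem_closedBall_self hr.le)), avg_congr (fun y hy => h y (hx (ball_subset_closedBall hy)))]
  exact hU.avg hr hx

lemma poisson_mod (hUo : IsOpen U) (hu : SupH u U) {x0 : Euc (n+1)} {R : ℝ} (hR : 0 < R)
    (hB : closedBall x0 R ⊆ U) :
    ∃ v, SupH v U ∧ (∀ x ∈ U, v x ≤ u x) ∧ (∀ x ∉ ball x0 R, v x = u x) ∧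
      (∀ x r, 0 < r → closedBall x r ⊆ ball x0 R → v x = ⨍ y in ball x r, v y) ∧
      (∀ m, (∀ x ∈ U, m ≤ u x) → ∀ x ∈ U, m ≤ v x) := by
  obtain ⟨g, hg, hgu⟩ := tietze (isClosed_closedBall (x := x0) (ε := R)) (hu.cont.mono hB)
  obtain ⟨h, hh, hhg, hhm⟩ := dirichlet x0 hR hg
  have hvh : ∀ x ∈ closedBall x0 R, u x + (h x - g x) = h x := fun x hx => by rw [hgu hx]; ring
  have hle : ∀ y ∈ closedBall x0 R, 0 ≤ g y - h y := by
    refine min_principle' (isCompact_closedBall x0 R) isOpen_ball ball_subset_closedBall (by fun_prop) ?_ ?_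
    · intro z hz
      obtain ⟨r1, hr1, hr1s⟩ : ∃ r' > 0, closedBall z r' ⊆ ball x0 R :=
        Metric.nhds_basis_closedBall.mem_iff.1 (isOpen_ball.mem_nhds hz)
      refine ⟨r1, hr1, fun t ht ht1 => ?_⟩
      have hs := (closedBall_subset_closedBall ht1.le).trans hr1s
      rw [avg_sub (by fun_prop) (by fun_prop), ← hhm z t ht hs]
      have := hu.avg ht (hs.trans (ball_subset_closedBall.trans hB))
      rw [← hgu (ball_subset_closedBall hz), avg_congr (g := g)
        (fun y hy => (hgu (ball_subset_closedBall (hs (ball_subset_closedBall hy)))).symm)] at this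
      linarith
    · intro y hy
      rw [hhg y hy.2]; simp
  have hvu : ∀ x, u x + (h x - g x) ≤ u x := by
    intro x
    by_cases hx : x ∈ ball x0 R
    · have := hle x (ball_subset_closedBall hx); linarith
    · rw [hhg x hx]; simp
  have hvm : ∀ x r, 0 < r → closedBall x r ⊆ ball x0 R →
      u x + (h x - g x) = ⨍ y in ball x r, (u y + (h y - g y)) := by
    intro x r hr hx
    rw [hvh x (ball_subset_closedBall (hx (mem_closedBall_self hr.le))), hhm x r hr hx]
    exact avg_congr fun y hy => (hvh y (ball_subset_closedBall (hx (ball_subset_closedBall hy)))).symm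
  have hvc : ContinuousOn (fun x => u x + (h x - g x)) U := hu.cont.add (by fun_prop)
  refine ⟨fun x => u x + (h x - g x), ?_, fun x _ => hvu x, fun x hx => by simp [hhg x hx], hvm, ?_⟩
  · refine superharm_of_local hvc ?_
    intro z hz
    by_cases hzb : z ∈ ball x0 R
    · obtain ⟨r1, hr1, hr1s⟩ : ∃ r' > 0, closedBall z r' ⊆ ball x0 R :=
        Metric.nhds_basis_closedBall.mem_iff.1 (isOpen_ball.mem_nhds hzb)
      exact ⟨r1, hr1, fun t ht ht1 => (hvm z t ht ((closedBall_subset_closedBall ht1.le).trans hr1s)).ge⟩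
    · obtain ⟨r1, hr1, hr1s⟩ : ∃ r' > 0, closedBall z r' ⊆ U :=
        Metric.nhds_basis_closedBall.mem_iff.1 (hUo.mem_nhds hz)
      refine ⟨r1, hr1, fun t ht ht1 => ?_⟩
      have hs := (closedBall_subset_closedBall ht1.le).trans hr1s
      have e : u z + (h z - g z) = u z := by simp [hhg z hzb]
      beta_reduce
      rw [e]
      exact (avg_mono (hvc.mono hs) (hu.cont.mono hs) fun y _ => hvu y).trans (hu.avg ht hs)
  · intro m hm x hx
    by_cases hxb : x ∈ ball x0 R
    · simp only
      rw [hvh x (ball_subset_closedBall hxb)]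
      refine min_principle' (isCompact_closedBall x0 R) isOpen_ball ball_subset_closedBall (w := h) (by fun_prop) ?_ ?_ x
        (ball_subset_closedBall hxb)
      · intro z hz
        obtain ⟨r1, hr1, hr1s⟩ : ∃ r' > 0, closedBall z r' ⊆ ball x0 R :=
          Metric.nhds_basis_closedBall.mem_iff.1 (isOpen_ball.mem_nhds hz)
        exact ⟨r1, hr1, fun t ht ht1 => (hhm z t ht ((closedBall_subset_closedBall ht1.le).trans hr1s)).ge⟩
      · intro y hy
        rw [hhg y hy.2, hgu hy.1]
        exact hm y (hB hy.1)
    · simp only [hhg x hxb, sub_self, add_zero]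
      exact hm x hx

lemma vol_scale (x y : Euc (n+1)) {a b : ℝ} (ha : 0 < a) (hb : 0 < b) :
    (volume : Measure (Euc (n+1))).real (ball y b) = (b / a) ^ (n+1) * (volume : Measure (Euc (n+1))).real (ball x a) := by
  have h : ∀ (z : Euc (n+1)) {c : ℝ}, 0 < c → (volume : Measure (Euc (n+1))).real (ball z c) = c ^ (n+1) *
      (volume : Measure (Euc (n+1))).real (ball 0 1) := by
    intro z c hc
    rw [measureReal_def, Measure.addHaar_ball_of_pos _ _ hc, ENNReal.toReal_mul, ENNReal.toReal_ofReal (by positivity)]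
    simp [measureReal_def]
  rw [h y hb, h x ha, div_pow]
  field_simp

/-- Harnack type inequality giving a modulus of continuity. -/
lemma harnack_mod {x0 : Euc (n+1)} {R M : ℝ} (hR : 0 < R) {h : Euc (n+1) → ℝ}
    (hc : ContinuousOn h (ball x0 R)) (h0 : ∀ x ∈ ball x0 R, 0 ≤ h x) (hM : ∀ x ∈ ball x0 R, h x ≤ M)
    (hm : ∀ x r, 0 < r → closedBall x r ⊆ ball x0 R → h x = ⨍ y in ball x r, h y)
    {x y : Euc (n+1)} (hx : x ∈ ball x0 (R/4)) (hy : y ∈ ball x0 (R/4)) :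
    h x ≤ h y + ((1 + dist x y / (R/4)) ^ (n+1) - 1) * M := by
  set ρ := R / 4 with hρ
  have hρ0 : 0 < ρ := by positivity
  set t := dist x y with ht
  have ht0 : 0 ≤ t := dist_nonneg
  rw [mem_ball] at hx hy
  have htR : t < 2 * ρ := by
    have := dist_triangle_right x y x0
    linarith
  have s1 : closedBall x ρ ⊆ ball x0 R := closedBall_subset_ball' (by linarith)
  have s2 : closedBall y (ρ + t) ⊆ ball x0 R := closedBall_subset_ball' (by linarith)
  have s3 : ball x ρ ⊆ ball y (ρ + t) := ball_subset_ball' (by linarith)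
  have e1 := hm x ρ hρ0 s1
  have e2 := hm y (ρ + t) (by linarith) s2
  rw [avg_eq] at e1 e2
  have v1 := volball_pos x hρ0
  have v2 := volball_pos y (show 0 < ρ + t by linarith)
  have i2 : ∫ z in ball y (ρ+t), h z = (volume : Measure (Euc (n+1))).real (ball y (ρ + t)) * h y := by
    rw [e2]; field_simp
  have i1 : ∫ z in ball x ρ, h z = (volume : Measure (Euc (n+1))).real (ball x ρ) * h x := by
    rw [e1]; field_simp
  have hle : ∫ z in ball x ρ, h z ≤ ∫ z in ball y (ρ+t), h z := by
    refine setIntegral_mono_set (integrableOn_ball' (hc.mono s2)) ?_ (Eventually.of_forall s3)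
    filter_upwards [ae_restrict_mem measurableSet_ball] with z hz
    exact h0 z (s2 (ball_subset_closedBall hz))
  rw [i1, i2, vol_scale x y hρ0 (by linarith : 0 < ρ + t)] at hle
  have hh : h x ≤ ((ρ + t) / ρ) ^ (n+1) * h y := by
    by_contra hcon
    push Not at hcon
    nlinarith
  have e3 : (ρ + t) / ρ = 1 + t / ρ := by field_simp
  rw [e3] at hh
  have hy' : y ∈ ball x0 R := s2 (mem_closedBall_self (by linarith))
  have h1 : 0 ≤ (1 + t / ρ) ^ (n+1) - 1 := by
    have : 0 ≤ t / ρ := by positivity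
    have := one_le_pow₀ (n := n+1) (show 1 ≤ 1 + t / ρ by linarith)
    linarith
  have := mul_le_mul_of_nonneg_left (hM y hy') h1
  nlinarith

end



section
variable {n : ℕ} {U : Set (Euc (n+1))} {t : Euc (n+1) → ℝ}

/-- competitors of `t` -/
def Vfam (U : Set (Euc (n+1))) (t : Euc (n+1) → ℝ) : Set (Euc (n+1) → ℝ) :=
  {v | SupH v U ∧ (∀ x ∈ U, 0 ≤ v x) ∧ (∀ x ∈ U, v x ≤ t x) ∧
    ∃ K, IsCompact K ∧ K ⊆ U ∧ ∀ x ∈ U \ K, v x = t x}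

/-- lower envelope -/
def Henv (U : Set (Euc (n+1))) (t : Euc (n+1) → ℝ) (x : Euc (n+1)) : ℝ :=
  sInf ((fun v => v x) '' Vfam U t)

lemma self_mem (ht : SupH t U) (h0 : ∀ x ∈ U, 0 ≤ t x) : t ∈ Vfam U t :=
  ⟨ht, h0, fun _ _ => le_rfl, ∅, isCompact_empty, empty_subset _, fun _ _ => rfl⟩

lemma Henv_bdd {x : Euc (n+1)} (hx : x ∈ U) : BddBelow ((fun v => v x) '' Vfam U t) := by
  refine ⟨0, ?_⟩
  rintro _ ⟨v, hv, rfl⟩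
  exact hv.2.1 x hx

lemma Henv_le {x : Euc (n+1)} (hx : x ∈ U) {v : Euc (n+1) → ℝ} (hv : v ∈ Vfam U t) : Henv U t x ≤ v x :=
  csInf_le (Henv_bdd hx) ⟨v, hv, rfl⟩

lemma le_Henv (ht : SupH t U) (h0 : ∀ x ∈ U, 0 ≤ t x) {x : Euc (n+1)} {c : ℝ}
    (h : ∀ v ∈ Vfam U t, c ≤ v x) : c ≤ Henv U t x := by
  refine le_csInf ⟨_, t, self_mem ht h0, rfl⟩ ?_
  rintro _ ⟨v, hv, rfl⟩
  exact h v hv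

lemma Vfam_min {u v : Euc (n+1) → ℝ} (hu : u ∈ Vfam U t) (hv : v ∈ Vfam U t) :
    (fun x => min (u x) (v x)) ∈ Vfam U t := by
  obtain ⟨a1, a2, a3, K, a4, a5, a6⟩ := hu
  obtain ⟨b1, b2, b3, K', b4, b5, b6⟩ := hv
  refine ⟨a1.min b1, fun x hx => le_min (a2 x hx) (b2 x hx), fun x hx => (min_le_left _ _).trans (a3 x hx),
    K ∪ K', a4.union b4, union_subset a5 b5, ?_⟩
  rintro x ⟨hx, hxK⟩
  simp only [mem_union, not_or] at hxK
  beta_reduce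
  rw [a6 x ⟨hx, hxK.1⟩, b6 x ⟨hx, hxK.2⟩, min_self]

lemma Vfam_mod (hUo : IsOpen U) {u : Euc (n+1) → ℝ} (hu : u ∈ Vfam U t) {x0 : Euc (n+1)} {R : ℝ} (hR : 0 < R)
    (hB : closedBall x0 R ⊆ U) :
    ∃ v ∈ Vfam U t, (∀ x ∈ U, v x ≤ u x) ∧
      (∀ x r, 0 < r → closedBall x r ⊆ ball x0 R → v x = ⨍ y in ball x r, v y) := by
  obtain ⟨a1, a2, a3, K, a4, a5, a6⟩ := hu
  obtain ⟨v, v1, v2, v3, v4, v5⟩ := poisson_mod hUo a1 hR hB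
  refine ⟨v, ⟨v1, v5 0 a2, fun x hx => (v2 x hx).trans (a3 x hx), K ∪ closedBall x0 R,
    a4.union (isCompact_closedBall _ _), union_subset a5 hB, ?_⟩, v2, v4⟩
  rintro x ⟨hx, hxK⟩
  simp only [mem_union, not_or] at hxK
  rw [v3 x (fun h => hxK.2 (ball_subset_closedBall h)), a6 x ⟨hx, hxK.1⟩]

lemma Henv_cont (hUo : IsOpen U) (ht : SupH t U) (h0 : ∀ x ∈ U, 0 ≤ t x) {M : ℝ} (hM : ∀ x ∈ U, t x ≤ M) :
    ContinuousOn (Henv U t) U := by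
  intro x0 hx0
  refine ContinuousAt.continuousWithinAt ?_
  obtain ⟨R, hR, hRs⟩ : ∃ r' > 0, closedBall x0 r' ⊆ U :=
    Metric.nhds_basis_closedBall.mem_iff.1 (hUo.mem_nhds hx0)
  have hbU : ball x0 R ⊆ U := ball_subset_closedBall.trans hRs
  have key : ∀ x ∈ ball x0 (R/4), ∀ y ∈ ball x0 (R/4),
      Henv U t x ≤ Henv U t y + ((1 + dist x y / (R/4)) ^ (n+1) - 1) * M := by
    intro x hx y hy
    have hxU : x ∈ U := hbU (ball_subset_ball (by linarith) hx)
    have hyU : y ∈ U := hbU (ball_subset_ball (by linarith) hy)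
    rw [← sub_le_iff_le_add]
    refine le_Henv ht h0 fun v hv => ?_
    obtain ⟨v', hv', h1, h2⟩ := Vfam_mod hUo hv hR hRs
    have := harnack_mod hR (hv'.1.cont.mono hbU) (fun x hx => hv'.2.1 x (hbU hx))
      (fun x hx => (hv'.2.2.1 x (hbU hx)).trans (hM x (hbU hx))) h2 hx hy
    have h3 := Henv_le hxU hv'
    have h4 := h1 y hyU
    linarith
  rw [ContinuousAt, tendsto_iff_dist_tendsto_zero]
  have hlim : Tendsto (fun x => ((1 + dist x x0 / (R/4)) ^ (n+1) - 1) * M) (𝓝 x0) (𝓝 0) := by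
    have : Continuous (fun x => ((1 + dist x x0 / (R/4)) ^ (n+1) - 1) * M) := by fun_prop
    simpa using this.tendsto x0
  refine squeeze_zero' (Eventually.of_forall fun _ => dist_nonneg) ?_ hlim
  filter_upwards [ball_mem_nhds x0 (show 0 < R / 4 by positivity)] with x hx
  have hx00 : x0 ∈ ball x0 (R/4) := mem_ball_self (by positivity)
  have h1 := key x hx x0 hx00
  have h2 := key x0 hx00 x hx
  rw [dist_comm x0 x] at h2
  rw [Real.dist_eq, abs_le]
  constructor <;> linarith

lemma Henv_sub (hUo : IsOpen U) (ht : SupH t U) (h0 : ∀ x ∈ U, 0 ≤ t x) {M : ℝ} (hM : ∀ x ∈ U, t x ≤ M) :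
    SubharmonicOn (Henv U t) U := by
  have hc := Henv_cont hUo ht h0 hM
  refine ⟨hc, fun x hx r hr hxr => ?_⟩
  refine le_of_forall_pos_le_add fun ε hε => ?_
  obtain ⟨δ, hδ, hδs⟩ := (isCompact_closedBall x r).exists_cthickening_subset_open hUo hxr
  rw [cthickening_closedBall hδ.le hr.le] at hδs
  -- a competitor uniformly close to the envelope
  obtain ⟨v, hv, hvε⟩ : ∃ v ∈ Vfam U t, ∀ y ∈ closedBall x r, v y ≤ Henv U t y + ε := by
    refine (isCompact_closedBall x r).induction_on
      (p := fun s => ∃ v ∈ Vfam U t, ∀ y ∈ s, v y ≤ Henv U t y + ε) ?_ ?_ ?_ ?_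
    · exact ⟨t, self_mem ht h0, by simp⟩
    · rintro s s' hss ⟨v, hv, h⟩
      exact ⟨v, hv, fun y hy => h y (hss hy)⟩
    · rintro s s' ⟨v, hv, h⟩ ⟨v', hv', h'⟩
      refine ⟨_, Vfam_min hv hv', ?_⟩
      rintro y (hy | hy)
      · exact (min_le_left _ _).trans (h y hy)
      · exact (min_le_right _ _).trans (h' y hy)
    · intro y hy
      have hyU := hxr hy
      obtain ⟨_, ⟨v, hv, rfl⟩, hlt⟩ := exists_lt_of_csInf_lt (s := (fun v => v y) '' Vfam U t)
        ⟨_, t, self_mem ht h0, rfl⟩ (show sInf _ < Henv U t y + ε by unfold Henv; linarith)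
      have c1 : ContinuousAt v y := hv.1.cont.continuousAt (hUo.mem_nhds hyU)
      have c2 : ContinuousAt (fun z => Henv U t z + ε) y :=
        (hc.continuousAt (hUo.mem_nhds hyU)).add continuousAt_const
      refine ⟨{z | v z < Henv U t z + ε}, mem_nhdsWithin_of_mem_nhds (c1.eventually_lt c2 hlt), v, hv,
        fun z hz => le_of_lt hz⟩
  obtain ⟨v', hv', h1, h2⟩ := Vfam_mod hUo hv (show 0 < δ + r by linarith) hδs
  have e := h2 x r hr (closedBall_subset_ball (by linarith))
  calc Henv U t x ≤ v' x := Henv_le hx hv'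
    _ = ⨍ y in ball x r, v' y := e
    _ ≤ ⨍ y in ball x r, (Henv U t y + ε) := by
      refine avg_mono (hv'.1.cont.mono hxr) ((hc.mono hxr).add continuousOn_const) fun y hy => ?_
      have hy' := ball_subset_closedBall hy
      exact (h1 y (hxr hy')).trans (hvε y hy')
    _ = _ := by
      rw [avg_add (hc.mono hxr) continuousOn_const, avg_const _ _ hr]

end



section
variable {n : ℕ} {Ω : Set (Euc (n+1))} {p : Euc (n+1)}

/-- nonnegativity principle at the pole `p` -/
def PosAt (Ω : Set (Euc (n+1))) (p : Euc (n+1)) : Prop :=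
  ∀ g : Euc (n+1) → ℝ, SupH g Ω → (∃ m, ∀ x ∈ Ω, m ≤ g x) →
    (∀ ξ ∈ frontier Ω, ∀ ε > 0, ∀ᶠ x in 𝓝[Ω] ξ, -ε ≤ g x) → 0 ≤ g p

/-- admissible bounded competitors -/
def Adm (Ω : Set (Euc (n+1))) (A : Set (Euc (n+1))) (u : Euc (n+1) → ℝ) : Prop :=
  SupH u Ω ∧ (∃ m, ∀ x ∈ Ω, m ≤ u x) ∧ (∃ M, ∀ x ∈ Ω, u x ≤ M) ∧
    ∀ ξ ∈ frontier Ω, ∀ ε > 0, ∀ᶠ x in 𝓝[Ω] ξ, A.indicator (fun _ => (1:ℝ)) ξ - ε ≤ u x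

lemma Adm.mem {A : Set (Euc (n+1))} {u : Euc (n+1) → ℝ} (h : Adm Ω A u) :
    u ∈ upperFamily Ω (A.indicator fun _ => 1) := by
  obtain ⟨h1, ⟨m, h2⟩, ⟨M, h3⟩, h4⟩ := h
  refine ⟨h1, ⟨m, ?_⟩, fun ξ hξ => ?_⟩
  · rintro _ ⟨x, hx, rfl⟩; exact h2 x hx
  · have : (𝓝[Ω] ξ).NeBot := mem_closure_iff_nhdsWithin_neBot.1 hξ.1
    have hev : ∀ᶠ x in 𝓝[Ω] ξ, u x ≤ M := eventually_mem_nhdsWithin.mono h3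
    refine le_of_forall_sub_le fun ε hε => ?_
    exact le_liminf_of_le (IsBoundedUnder.isCoboundedUnder_ge ⟨M, by simpa using hev⟩) (h4 ξ hξ ε hε)

lemma adm_of_mem {A : Set (Euc (n+1))} {u : Euc (n+1) → ℝ}
    (h : u ∈ upperFamily Ω (A.indicator fun _ => 1)) : Adm Ω A (fun x => min (u x) 1) := by
  obtain ⟨h1, ⟨m, h2⟩, h3⟩ := h
  have h2' : ∀ x ∈ Ω, m ≤ u x := fun x hx => h2 ⟨x, hx, rfl⟩
  have h1' : SupH u Ω := h1
  refine ⟨h1'.min (SupH.const 1), ⟨min m 1, fun x hx => min_le_min_right _ (h2' x hx)⟩,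
    ⟨1, fun x _ => min_le_right _ _⟩, fun ξ hξ ε hε => ?_⟩
  have hb : IsBoundedUnder (· ≥ ·) (𝓝[Ω] ξ) u := ⟨m, by simpa using eventually_mem_nhdsWithin.mono h2'⟩
  have := eventually_lt_of_lt_liminf (lt_of_lt_of_le (sub_lt_self _ hε) (h3 ξ hξ)) hb
  filter_upwards [this] with x hx
  refine le_min hx.le ?_
  have : A.indicator (fun _ => (1:ℝ)) ξ ≤ 1 := indicator_le_self' (fun _ _ => zero_le_one) ξ
  linarith

lemma ind_nonneg (A : Set (Euc (n+1))) (ξ : Euc (n+1)) : 0 ≤ A.indicator (fun _ => (1:ℝ)) ξ :=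
  indicator_nonneg (fun _ _ => zero_le_one) ξ

lemma ind_le_one (A : Set (Euc (n+1))) (ξ : Euc (n+1)) : A.indicator (fun _ => (1:ℝ)) ξ ≤ 1 :=
  indicator_le_self' (fun _ _ => zero_le_one) ξ

lemma posAt_of_pos {A : Set (Euc (n+1))} (hp : p ∈ Ω) (h : 0 < hMeasure Ω p A) : PosAt Ω p := by
  intro g hg ⟨m, hm⟩ hb
  by_contra! hneg
  have hbb : BddBelow ((fun u : Euc (n+1) → ℝ => u p) '' upperFamily Ω (A.indicator fun _ => 1)) := by
    by_contra hbb
    have : hMeasure Ω p A = 0 := by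
      unfold hMeasure perron
      exact Real.sInf_of_not_bddBelow hbb
    linarith
  obtain ⟨B, hB⟩ := hbb
  set K : ℝ := (|B| + 2) / (-(g p)) with hK
  have hK0 : 0 < K := by
    have : 0 < -(g p) := by linarith
    positivity
  have hadm : Adm Ω A (fun x => K * min (g x) 0 + 1) := by
    refine ⟨((hg.min (SupH.const 0)).const_mul hK0.le).add (SupH.const 1),
      ⟨K * min m 0 + 1, fun x hx => ?_⟩, ⟨1, fun x hx => ?_⟩, fun ξ hξ ε hε => ?_⟩
    · have := min_le_min_right 0 (hm x hx)
      nlinarith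
    · have := min_le_right (g x) 0
      nlinarith
    · filter_upwards [hb ξ hξ (ε / K) (by positivity)] with x hx
      have h1 : -(ε / K) ≤ min (g x) 0 := le_min hx (by have : 0 < ε / K := by positivity
                                                        linarith)
      have h2 : K * -(ε / K) ≤ K * min (g x) 0 := mul_le_mul_of_nonneg_left h1 hK0.le
      have h3 : K * -(ε / K) = -ε := by field_simp
      have := ind_le_one A ξ
      linarith
  have h1 := hB ⟨_, hadm.mem, rfl⟩
  simp only [min_eq_left hneg.le] at h1
  have h2 : K * g p = -(|B| + 2) := by
    have := hneg.ne
    rw [hK]; field_simp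
  have := neg_abs_le B
  linarith

lemma adm_nonneg (hP : PosAt Ω p) {A : Set (Euc (n+1))} {u : Euc (n+1) → ℝ} (h : Adm Ω A u) : 0 ≤ u p := by
  refine hP u h.1 h.2.1 fun ξ hξ ε hε => ?_
  filter_upwards [h.2.2.2 ξ hξ ε hε] with x hx
  have := ind_nonneg A ξ
  linarith

lemma UF_bdd (hP : PosAt Ω p) (A : Set (Euc (n+1))) :
    0 ∈ lowerBounds ((fun u : Euc (n+1) → ℝ => u p) '' upperFamily Ω (A.indicator fun _ => 1)) := by
  rintro _ ⟨u, hu, rfl⟩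
  exact (adm_nonneg hP (adm_of_mem hu)).trans (min_le_left _ _)

lemma adm_one (A : Set (Euc (n+1))) : Adm Ω A (fun _ => 1) :=
  ⟨SupH.const 1, ⟨1, fun _ _ => le_rfl⟩, ⟨1, fun _ _ => le_rfl⟩, fun ξ _ ε hε =>
    Eventually.of_forall fun x => by have := ind_le_one A ξ; linarith⟩

lemma hM_le (hP : PosAt Ω p) {A : Set (Euc (n+1))} {u : Euc (n+1) → ℝ} (h : Adm Ω A u) :
    hMeasure Ω p A ≤ u p :=
  csInf_le ⟨0, UF_bdd hP A⟩ ⟨u, h.mem, rfl⟩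

lemma hM_lt {A : Set (Euc (n+1))} {t : ℝ} (h : hMeasure Ω p A < t) : ∃ u, Adm Ω A u ∧ u p < t := by
  obtain ⟨_, ⟨u, hu, rfl⟩, hut⟩ := exists_lt_of_csInf_lt (s := (fun u : Euc (n+1) → ℝ => u p) '' upperFamily Ω (A.indicator fun _ => 1))
    ⟨_, _, (adm_one A).mem, rfl⟩ h
  exact ⟨_, adm_of_mem hu, (min_le_left _ _).trans_lt hut⟩

lemma hM_nonneg (hP : PosAt Ω p) (A : Set (Euc (n+1))) : 0 ≤ hMeasure Ω p A :=
  le_csInf ⟨_, _, (adm_one A).mem, rfl⟩ (UF_bdd hP A)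

lemma hM_le_one (hP : PosAt Ω p) (A : Set (Euc (n+1))) : hMeasure Ω p A ≤ 1 := hM_le hP (adm_one A)

lemma hM_mono (hP : PosAt Ω p) {A B : Set (Euc (n+1))} (hAB : A ⊆ B) : hMeasure Ω p A ≤ hMeasure Ω p B := by
  refine le_of_forall_gt fun t ht => ?_
  obtain ⟨u, hu, hut⟩ := hM_lt ht
  refine (hM_le hP (u := u) ⟨hu.1, hu.2.1, hu.2.2.1, fun ξ hξ ε hε => ?_⟩).trans_lt hut
  filter_upwards [hu.2.2.2 ξ hξ ε hε] with x hx
  have : A.indicator (fun _ => (1:ℝ)) ξ ≤ B.indicator (fun _ => (1:ℝ)) ξ :=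
    indicator_le_indicator_of_subset hAB (fun _ => zero_le_one) ξ
  linarith

lemma hM_union (hP : PosAt Ω p) (A B : Set (Euc (n+1))) :
    hMeasure Ω p (A ∪ B) ≤ hMeasure Ω p A + hMeasure Ω p B := by
  refine le_of_forall_pos_le_add fun δ hδ => ?_
  obtain ⟨u, hu, hut⟩ := hM_lt (lt_add_of_pos_right (hMeasure Ω p A) (half_pos hδ))
  obtain ⟨v, hv, hvt⟩ := hM_lt (lt_add_of_pos_right (hMeasure Ω p B) (half_pos hδ))
  obtain ⟨a1, ⟨m, a2⟩, ⟨M, a3⟩, a4⟩ := hu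
  obtain ⟨b1, ⟨m', b2⟩, ⟨M', b3⟩, b4⟩ := hv
  have : hMeasure Ω p (A ∪ B) ≤ u p + v p := by
    refine hM_le hP (u := fun x => u x + v x) ⟨a1.add b1, ⟨m + m', fun x hx => add_le_add (a2 x hx) (b2 x hx)⟩,
      ⟨M + M', fun x hx => add_le_add (a3 x hx) (b3 x hx)⟩, fun ξ hξ ε hε => ?_⟩
    filter_upwards [a4 ξ hξ _ (half_pos hε), b4 ξ hξ _ (half_pos hε)] with x hx hx'
    have h1 : (A ∪ B).indicator (fun _ => (1:ℝ)) ξ ≤ A.indicator (fun _ => (1:ℝ)) ξ + B.indicator (fun _ => (1:ℝ)) ξ := by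
      by_cases h1 : ξ ∈ A <;> by_cases h2 : ξ ∈ B <;> simp [h1, h2]
    linarith
  linarith

lemma hM_empty (hP : PosAt Ω p) : hMeasure Ω p ∅ = 0 := by
  refine le_antisymm ?_ (hM_nonneg hP _)
  refine hM_le hP (u := fun _ => 0) ⟨SupH.const 0, ⟨0, fun _ _ => le_rfl⟩, ⟨0, fun _ _ => le_rfl⟩, fun ξ _ ε hε =>
    Eventually.of_forall fun x => ?_⟩
  simp [hε.le]

lemma hM_biUnion (hP : PosAt Ω p) {ι : Type*} (s : Finset ι) (A : ι → Set (Euc (n+1))) :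
    hMeasure Ω p (⋃ i ∈ s, A i) ≤ ∑ i ∈ s, hMeasure Ω p (A i) := by
  classical
  induction s using Finset.induction_on with
  | empty => simp [hM_empty hP]
  | insert a s ha ih =>
    rw [Finset.sum_insert ha, Finset.set_biUnion_insert]
    exact (hM_union hP _ _).trans (by gcongr)

end


section
variable {n : ℕ} {Ω : Set (Euc (n+1))} {p : Euc (n+1)}

/-- truncated Newtonian kernel -/
def tker (n : ℕ) (ξ : Euc (n+1)) (ρ : ℝ) (x : Euc (n+1)) : ℝ :=
  (max (‖x - ξ‖ ^ 2) (ρ ^ 2)) ^ (((1:ℝ) - n) / 2)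

lemma expo_neg (hn : 2 ≤ n) : ((1:ℝ) - n) / 2 < 0 := by
  have : (2:ℝ) ≤ n := by exact_mod_cast hn
  linarith

lemma tker_cont (ξ : Euc (n+1)) {ρ : ℝ} (hρ : 0 < ρ) : Continuous (tker n ξ ρ) := by
  unfold tker
  refine Continuous.rpow_const (by fun_prop) fun x => Or.inl ?_
  have : 0 < max (‖x - ξ‖ ^ 2) (ρ ^ 2) := lt_max_of_lt_right (by positivity)
  exact this.ne'

lemma tker_nonneg (ξ : Euc (n+1)) (ρ : ℝ) (x) : 0 ≤ tker n ξ ρ x := by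
  unfold tker; positivity

lemma tker_le (hn : 2 ≤ n) (ξ : Euc (n+1)) {ρ : ℝ} (hρ : 0 < ρ) (x) :
    tker n ξ ρ x ≤ (ρ ^ 2) ^ (((1:ℝ) - n) / 2) :=
  Real.rpow_le_rpow_of_nonpos (by positivity) (le_max_right _ _) (expo_neg hn).le

lemma tker_inner (ξ : Euc (n+1)) {ρ : ℝ} {x} (h : ‖x - ξ‖ ≤ ρ) :
    tker n ξ ρ x = (ρ ^ 2) ^ (((1:ℝ) - n) / 2) := by
  unfold tker
  rw [max_eq_right]
  have := norm_nonneg (x - ξ)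
  gcongr

lemma tker_outer (ξ : Euc (n+1)) {ρ : ℝ} (hρ : 0 < ρ) {x} (h : ρ ≤ ‖x - ξ‖) :
    tker n ξ ρ x = vpow (((1:ℝ) - n) / 2) ξ x := by
  unfold tker vpow
  rw [max_eq_left]
  gcongr

lemma tker_anti (hn : 2 ≤ n) (ξ : Euc (n+1)) {ρ ρ' : ℝ} (hρ : 0 < ρ) (h : ρ ≤ ρ') (x) :
    tker n ξ ρ' x ≤ tker n ξ ρ x := by
  unfold tker
  refine Real.rpow_le_rpow_of_nonpos (lt_max_of_lt_right (by positivity)) ?_ (expo_neg hn).le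
  gcongr

lemma tker_sup (hn : 2 ≤ n) {ξ : Euc (n+1)} (hξ : ξ ∉ Ω) {ρ : ℝ} (hρ : 0 < ρ) : SupH (tker n ξ ρ) Ω := by
  have hsub : Ω ⊆ {ξ}ᶜ := fun x hx h => hξ (h ▸ hx)
  have h1 : SupH (vpow (((1:ℝ) - n) / 2) ξ) Ω :=
    SupH.mk' ((vpow_contOn _ ξ).mono hsub) fun x r hr hx => (newton_mean hr (hx.trans hsub)).ge
  refine (h1.min (SupH.const ((ρ ^ 2) ^ (((1:ℝ) - n) / 2)))).congr fun x hx => ?_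
  have hx0 : 0 < ‖x - ξ‖ := norm_pos_iff.2 (sub_ne_zero.2 (hsub hx))
  rcases le_total ‖x - ξ‖ ρ with h | h
  · rw [tker_inner ξ h, min_eq_right]
    unfold vpow
    exact Real.rpow_le_rpow_of_nonpos (by positivity) (by gcongr) (expo_neg hn).le
  · rw [tker_outer ξ hρ h, min_eq_left]
    unfold vpow
    exact Real.rpow_le_rpow_of_nonpos (by positivity) (by gcongr) (expo_neg hn).le

/-- normalising constant -/
def kap (n : ℕ) (ℓ : ℝ) : ℝ := ((2 * ℓ) ^ 2) ^ (((1:ℝ) - n) / 2) - ((4 * ℓ) ^ 2) ^ (((1:ℝ) - n) / 2)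

lemma kap_pos (hn : 2 ≤ n) {ℓ : ℝ} (hℓ : 0 < ℓ) : 0 < kap n ℓ := by
  unfold kap
  rw [sub_pos]
  exact Real.rpow_lt_rpow_of_neg (by positivity) (by gcongr; norm_num) (expo_neg hn)

/-- bump function -/
def bump (n : ℕ) (ξ : Euc (n+1)) (ℓ : ℝ) (x : Euc (n+1)) : ℝ :=
  (kap n ℓ)⁻¹ * (tker n ξ (2 * ℓ) x - tker n ξ (4 * ℓ) x)

lemma bump_cont (ξ : Euc (n+1)) {ℓ : ℝ} (hℓ : 0 < ℓ) : Continuous (bump n ξ ℓ) :=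
  continuous_const.mul ((tker_cont ξ (by positivity)).sub (tker_cont ξ (by positivity)))

lemma bump_nonneg (hn : 2 ≤ n) (ξ : Euc (n+1)) {ℓ : ℝ} (hℓ : 0 < ℓ) (x) : 0 ≤ bump n ξ ℓ x :=
  mul_nonneg (inv_nonneg.2 (kap_pos hn hℓ).le)
    (sub_nonneg.2 (tker_anti hn ξ (by positivity) (by linarith) x))

lemma bump_one (hn : 2 ≤ n) (ξ : Euc (n+1)) {ℓ : ℝ} (hℓ : 0 < ℓ) {x} (h : x ∈ closedBall ξ (2 * ℓ)) :
    bump n ξ ℓ x = 1 := by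
  rw [mem_closedBall, dist_eq_norm] at h
  unfold bump
  rw [tker_inner ξ h, tker_inner ξ (h.trans (by linarith : 2 * ℓ ≤ 4 * ℓ))]
  exact inv_mul_cancel₀ (kap_pos hn hℓ).ne'

lemma bump_zero (ξ : Euc (n+1)) {ℓ : ℝ} (hℓ : 0 < ℓ) {x} (h : x ∉ closedBall ξ (4 * ℓ)) :
    bump n ξ ℓ x = 0 := by
  rw [mem_closedBall, dist_eq_norm, not_le] at h
  unfold bump
  rw [tker_outer ξ (by positivity) h.le, tker_outer ξ (by positivity) (by linarith : 2 * ℓ ≤ _), sub_self, mul_zero]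

lemma bump_le_one (hn : 2 ≤ n) (ξ : Euc (n+1)) {ℓ : ℝ} (hℓ : 0 < ℓ) (x) : bump n ξ ℓ x ≤ 1 := by
  by_cases h : x ∈ closedBall ξ (4 * ℓ)
  · rw [mem_closedBall, dist_eq_norm] at h
    unfold bump
    rw [tker_inner ξ h]
    calc _ ≤ (kap n ℓ)⁻¹ * kap n ℓ := by
          refine mul_le_mul_of_nonneg_left ?_ (inv_nonneg.2 (kap_pos hn hℓ).le)
          exact sub_le_sub_right (tker_le hn ξ (by positivity) x) _
      _ = 1 := inv_mul_cancel₀ (kap_pos hn hℓ).ne'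
  · rw [bump_zero ξ hℓ h]; exact zero_le_one

lemma Vfam_ev (hΩ : IsOpen Ω) {t v : Euc (n+1) → ℝ} (hv : v ∈ Vfam Ω t) {ξ} (hξ : ξ ∈ frontier Ω) :
    ∀ᶠ x in 𝓝[Ω] ξ, v x = t x := by
  obtain ⟨-, -, -, K, hK, hKΩ, h⟩ := hv
  have hξK : ξ ∉ K := fun hh => by
    rw [hΩ.frontier_eq] at hξ
    exact hξ.2 (hKΩ hh)
  have h1 : ∀ᶠ x in 𝓝[Ω] ξ, x ∈ Kᶜ := mem_nhdsWithin_of_mem_nhds (hK.isClosed.isOpen_compl.mem_nhds hξK)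
  filter_upwards [h1, eventually_mem_nhdsWithin] with x hx hx'
  exact h x ⟨hx', hx⟩

lemma Henv_nonneg {t : Euc (n+1) → ℝ} (ht : SupH t Ω) (h0 : ∀ x ∈ Ω, 0 ≤ t x) {x} (hx : x ∈ Ω) : 0 ≤ Henv Ω t x :=
  le_Henv ht h0 fun _ hv => hv.2.1 x hx

lemma hM_one_bound (hn : 2 ≤ n) (hΩ : IsOpen Ω) (hP : PosAt Ω p) {ξ : Euc (n+1)} (hξ : ξ ∉ Ω) {ℓ : ℝ} (hℓ : 0 < ℓ)
    {A : Set (Euc (n+1))} (hA : A ⊆ closedBall ξ (2 * ℓ)) :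
    hMeasure Ω p A ≤ (kap n ℓ)⁻¹ * (Henv Ω (tker n ξ (2 * ℓ)) p - Henv Ω (tker n ξ (4 * ℓ)) p) := by
  have hk := kap_pos hn hℓ
  have h2 : 0 < 2 * ℓ := by positivity
  have h4 : 0 < 4 * ℓ := by positivity
  have hs := tker_sup hn hξ h2
  have ht := tker_sup hn hξ h4
  have hH := Henv_sub hΩ ht (fun x _ => tker_nonneg _ _ _) (fun x _ => tker_le hn ξ h4 x)
  have key : ∀ v ∈ Vfam Ω (tker n ξ (2 * ℓ)),
      kap n ℓ * hMeasure Ω p A + Henv Ω (tker n ξ (4 * ℓ)) p ≤ v p := by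
    intro v hv
    have hle : ∀ x ∈ Ω, Henv Ω (tker n ξ (4 * ℓ)) x ≤ tker n ξ (4 * ℓ) x := fun x hx =>
      Henv_le hx (self_mem ht fun x _ => tker_nonneg _ _ _)
    have : hMeasure Ω p A ≤ (kap n ℓ)⁻¹ * (v p - Henv Ω (tker n ξ (4 * ℓ)) p) := by
      refine hM_le hP (u := fun x => (kap n ℓ)⁻¹ * (v x - Henv Ω (tker n ξ (4 * ℓ)) x))
        ⟨(hv.1.sub hH).const_mul (inv_nonneg.2 hk.le),
        ⟨(kap n ℓ)⁻¹ * (0 - ((4 * ℓ) ^ 2) ^ (((1:ℝ) - n) / 2)), fun x hx => ?_⟩,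
        ⟨(kap n ℓ)⁻¹ * (((2 * ℓ) ^ 2) ^ (((1:ℝ) - n) / 2) - 0), fun x hx => ?_⟩, fun η hη ε hε => ?_⟩
      · exact mul_le_mul_of_nonneg_left (sub_le_sub (hv.2.1 x hx) ((hle x hx).trans (tker_le hn ξ h4 x)))
          (inv_nonneg.2 hk.le)
      · exact mul_le_mul_of_nonneg_left (sub_le_sub ((hv.2.2.1 x hx).trans (tker_le hn ξ h2 x))
          (Henv_nonneg ht (fun x _ => tker_nonneg _ _ _) hx)) (inv_nonneg.2 hk.le)
      · have hc : ∀ᶠ x in 𝓝[Ω] η, bump n ξ ℓ η - ε < bump n ξ ℓ x :=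
          mem_nhdsWithin_of_mem_nhds
            ((bump_cont ξ hℓ).continuousAt.eventually (lt_mem_nhds (sub_lt_self _ hε)))
        filter_upwards [hc, Vfam_ev hΩ hv hη, eventually_mem_nhdsWithin] with x hx1 hx2 hx3
        have hi : A.indicator (fun _ => (1:ℝ)) η ≤ bump n ξ ℓ η := by
          by_cases hηA : η ∈ A
          · rw [bump_one hn ξ hℓ (hA hηA)]; exact ind_le_one _ _
          · simp only [hηA, not_false_eq_true, indicator_of_notMem]; exact bump_nonneg hn ξ hℓ η
        have h5 : bump n ξ ℓ x ≤ (kap n ℓ)⁻¹ * (v x - Henv Ω (tker n ξ (4 * ℓ)) x) := by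
          unfold bump
          rw [hx2]
          exact mul_le_mul_of_nonneg_left (sub_le_sub_left (hle x hx3) _) (inv_nonneg.2 hk.le)
        linarith
    rw [inv_mul_eq_div, le_div_iff₀ hk] at this
    linarith
  have := le_Henv hs (fun x _ => tker_nonneg _ _ _) key
  rw [inv_mul_eq_div, le_div_iff₀ hk]
  linarith

lemma hM_sum_le_one (hn : 2 ≤ n) (hΩ : IsOpen Ω) (hP : PosAt Ω p) {ι : Type*} (S : Finset ι)
    (ξ : ι → Euc (n+1)) (ℓ : ι → ℝ) (A : ι → Set (Euc (n+1)))
    (hξ : ∀ i ∈ S, ξ i ∉ Ω) (hℓ : ∀ i ∈ S, 0 < ℓ i)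
    (hA : ∀ i ∈ S, A i ⊆ closedBall (ξ i) (2 * ℓ i))
    (hd : ∀ i ∈ S, ∀ j ∈ S, i ≠ j → Disjoint (closedBall (ξ i) (4 * ℓ i)) (closedBall (ξ j) (4 * ℓ j))) :
    ∑ i ∈ S, hMeasure Ω p (A i) ≤ 1 := by
  have hpsi : ∀ x, ∑ i ∈ S, bump n (ξ i) (ℓ i) x ≤ 1 := by
    intro x
    by_cases h : ∃ i ∈ S, x ∈ closedBall (ξ i) (4 * ℓ i)
    · obtain ⟨i, hi, hx⟩ := h
      rw [Finset.sum_eq_single_of_mem i hi]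
      · exact bump_le_one hn _ (hℓ i hi) x
      · intro j hj hij
        exact bump_zero _ (hℓ j hj) fun hxj => (disjoint_left.1 (hd j hj i hi hij)) hxj hx
    · push Not at h
      rw [Finset.sum_eq_zero fun i hi => bump_zero _ (hℓ i hi) (h i hi)]
      exact zero_le_one
  have hs : ∀ i ∈ S, SupH (tker n (ξ i) (2 * ℓ i)) Ω := fun i hi =>
    tker_sup hn (hξ i hi) (by have := hℓ i hi; positivity)
  have ht : ∀ i ∈ S, SupH (tker n (ξ i) (4 * ℓ i)) Ω := fun i hi =>
    tker_sup hn (hξ i hi) (by have := hℓ i hi; positivity)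
  have hsl : ∀ i ∈ S, ∀ x, tker n (ξ i) (2 * ℓ i) x ≤ ((2 * ℓ i) ^ 2) ^ (((1:ℝ) - n) / 2) := fun i hi x =>
    tker_le hn _ (by have := hℓ i hi; positivity) x
  have hHs : ∀ i ∈ S, SubharmonicOn (Henv Ω (tker n (ξ i) (2 * ℓ i))) Ω := fun i hi =>
    Henv_sub hΩ (hs i hi) (fun x _ => tker_nonneg _ _ _) (fun x _ => hsl i hi x)
  have hHle : ∀ i ∈ S, ∀ x ∈ Ω, Henv Ω (tker n (ξ i) (2 * ℓ i)) x ≤ tker n (ξ i) (2 * ℓ i) x := fun i hi x hx =>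
      Henv_le hx (self_mem (hs i hi) fun x _ => tker_nonneg _ _ _)
  have key : ∀ v : ι → Euc (n+1) → ℝ, (∀ i ∈ S, v i ∈ Vfam Ω (tker n (ξ i) (4 * ℓ i))) →
      0 ≤ 1 + ∑ i ∈ S, (kap n (ℓ i))⁻¹ * (v i p - Henv Ω (tker n (ξ i) (2 * ℓ i)) p) := by
    intro v hv
    refine hP (fun x => 1 + ∑ i ∈ S, (kap n (ℓ i))⁻¹ * (v i x - Henv Ω (tker n (ξ i) (2 * ℓ i)) x)) ?_ ?_ ?_
    · exact (SupH.const 1).add (SupH.sum S fun i hi => ((hv i hi).1.sub (hHs i hi)).const_mul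
        (inv_nonneg.2 (kap_pos hn (hℓ i hi)).le))
    · refine ⟨1 + ∑ i ∈ S, (kap n (ℓ i))⁻¹ * (0 - ((2 * ℓ i) ^ 2) ^ (((1:ℝ) - n) / 2)), fun x hx => ?_⟩
      refine add_le_add_right (Finset.sum_le_sum fun i hi => ?_) _
      exact mul_le_mul_of_nonneg_left (sub_le_sub ((hv i hi).2.1 x hx) ((hHle i hi x hx).trans (hsl i hi x)))
        (inv_nonneg.2 (kap_pos hn (hℓ i hi)).le)
    · intro η hη ε hε
      have hev : ∀ᶠ x in 𝓝[Ω] η, ∀ i ∈ S, v i x = tker n (ξ i) (4 * ℓ i) x :=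
        (Filter.eventually_all_finset S).2 fun i hi => Vfam_ev hΩ (hv i hi) hη
      filter_upwards [hev, eventually_mem_nhdsWithin] with x hx hxΩ
      have h1 : -∑ i ∈ S, bump n (ξ i) (ℓ i) x ≤
          ∑ i ∈ S, (kap n (ℓ i))⁻¹ * (v i x - Henv Ω (tker n (ξ i) (2 * ℓ i)) x) := by
        rw [← Finset.sum_neg_distrib]
        refine Finset.sum_le_sum fun i hi => ?_
        unfold bump
        rw [← mul_neg, neg_sub, hx i hi]
        exact mul_le_mul_of_nonneg_left (sub_le_sub_left (hHle i hi x hxΩ) _)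
          (inv_nonneg.2 (kap_pos hn (hℓ i hi)).le)
      have := hpsi x
      linarith
  refine le_of_forall_pos_le_add fun δ hδ => ?_
  set N : ℝ := S.card + 1 with hN
  have hN0 : 0 < N := by positivity
  have hch : ∀ i, ∃ v, i ∈ S → v ∈ Vfam Ω (tker n (ξ i) (4 * ℓ i)) ∧
      v p < Henv Ω (tker n (ξ i) (4 * ℓ i)) p + kap n (ℓ i) * (δ / N) := by
    intro i
    by_cases hi : i ∈ S
    · have hpos : 0 < kap n (ℓ i) * (δ / N) := mul_pos (kap_pos hn (hℓ i hi)) (by positivity)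
      obtain ⟨_, ⟨v, hv, rfl⟩, h⟩ := exists_lt_of_csInf_lt
        (s := (fun v => v p) '' Vfam Ω (tker n (ξ i) (4 * ℓ i)))
        ⟨_, _, self_mem (ht i hi) fun x _ => tker_nonneg _ _ _, rfl⟩ (lt_add_of_pos_right _ hpos)
      exact ⟨v, fun _ => ⟨hv, h⟩⟩
    · exact ⟨0, fun h => absurd h hi⟩
  choose v hv using hch
  have h1 := key v fun i hi => (hv i hi).1
  have h2 : ∑ i ∈ S, hMeasure Ω p (A i) + ∑ i ∈ S, (kap n (ℓ i))⁻¹ * (v i p - Henv Ω (tker n (ξ i) (2 * ℓ i)) p)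
      ≤ ∑ i ∈ S, (δ / N) := by
    rw [← Finset.sum_add_distrib]
    refine Finset.sum_le_sum fun i hi => ?_
    have hk := kap_pos hn (hℓ i hi)
    have h3 := hM_one_bound hn hΩ hP (hξ i hi) (hℓ i hi) (hA i hi)
    have h4 := (hv i hi).2
    have h5 : (kap n (ℓ i))⁻¹ * (v i p - Henv Ω (tker n (ξ i) (4 * ℓ i)) p) ≤ δ / N := by
      rw [inv_mul_eq_div, div_le_iff₀ hk]
      linarith
    linarith
  rw [Finset.sum_const, nsmul_eq_mul] at h2
  have h6 : (S.card : ℝ) * (δ / N) ≤ δ := by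
    rw [← mul_div_assoc, div_le_iff₀ hN0, hN]
    nlinarith
  linarith

end


lemma upper_reg (n : ℕ) (hn : 2 ≤ n) (C₀ : ℝ) (hC₀ : 1 ≤ C₀) :
    ∃ K : ℝ, 0 < K ∧ ∀ F : Set (Euc (n+1)), ADRegular n C₀ F → ∀ x ∈ F, ∀ r : ℝ, 0 < r →
      μH[n] (F ∩ ball x r) ≤ ENNReal.ofReal (K * r ^ n) := by
  obtain ⟨T, hTs, hTf, hT⟩ := (isCompact_closedBall (0 : Euc (n+1)) 1).finite_cover_balls
    (show (0:ℝ) < 1/4 by norm_num)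
  set N : ℝ := hTf.toFinset.card + 1 with hN
  have hN1 : 1 ≤ N := by rw [hN]; simp
  refine ⟨N * C₀, by positivity, fun F hF x hx r hr => ?_⟩
  by_cases hrd : ENNReal.ofReal r ≤ EMetric.diam F
  · refine ((hF x hx r hr hrd).2).trans (ENNReal.ofReal_le_ofReal ?_)
    have : C₀ ≤ N * C₀ := le_mul_of_one_le_left (by linarith) hN1
    gcongr
  rw [not_le] at hrd
  have hfin : EMetric.diam F ≠ ⊤ := (hrd.trans ENNReal.ofReal_lt_top).ne
  set d := (EMetric.diam F).toReal with hd
  have hdd : EMetric.diam F = ENNReal.ofReal d := (ENNReal.ofReal_toReal hfin).symm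
  have hd0 : 0 ≤ d := ENNReal.toReal_nonneg
  have hdr : d < r := by
    rw [hdd] at hrd
    exact (ENNReal.ofReal_lt_ofReal_iff hr).1 hrd
  have hdist : ∀ y ∈ F, ∀ z ∈ F, dist y z ≤ d := by
    intro y hy z hz
    have : edist y z ≤ EMetric.diam F := Metric.edist_le_ediam_of_mem hy hz
    rw [hdd, edist_dist] at this
    exact (ENNReal.ofReal_le_ofReal_iff hd0).1 this
  rcases hd0.eq_or_lt with h0 | h0
  · have hs : F ∩ ball x r ⊆ {x} := fun y hy => by
      have := hdist y hy.1 x hx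
      rw [← h0] at this
      exact dist_le_zero.1 this
    have : NullSingletonClass (μH[n] : Measure (Euc (n+1))) := Measure.nullSingletonClass_hausdorff _ (Nat.cast_pos.2 (by omega))
    refine (measure_mono hs).trans ?_
    rw [measure_singleton]; exact zero_le
  · have hcov : F ∩ ball x r ⊆ ⋃ c ∈ hTf.toFinset, F ∩ ball (x + d • c) (d / 4) := by
      rintro y ⟨hy, -⟩
      have h1 : d⁻¹ • (y - x) ∈ closedBall (0 : Euc (n+1)) 1 := by
        rw [mem_closedBall_zero_iff, norm_smul, norm_inv, Real.norm_of_nonneg hd0, inv_mul_le_iff₀ h0, mul_one,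
          ← dist_eq_norm]
        exact hdist y hy x hx
      obtain ⟨c, hc, hc'⟩ := mem_iUnion₂.1 (hT h1)
      refine mem_iUnion₂.2 ⟨c, hTf.mem_toFinset.2 hc, hy, ?_⟩
      rw [mem_ball, dist_eq_norm] at hc' ⊢
      have h2 : y - (x + d • c) = d • (d⁻¹ • (y - x) - c) := by
        rw [smul_sub, smul_inv_smul₀ h0.ne']; abel
      rw [h2, norm_smul, Real.norm_of_nonneg hd0]
      nlinarith
    have hone : ∀ c ∈ hTf.toFinset, μH[n] (F ∩ ball (x + d • c) (d / 4)) ≤ ENNReal.ofReal (C₀ * d ^ n) := by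
      intro c _
      rcases (F ∩ ball (x + d • c) (d / 4)).eq_empty_or_nonempty with he | ⟨y, hy, hy'⟩
      · rw [he, measure_empty]; exact zero_le
      · have hsub : F ∩ ball (x + d • c) (d / 4) ⊆ F ∩ ball y (d / 2) := by
          rintro z ⟨hz, hz'⟩
          refine ⟨hz, ?_⟩
          rw [mem_ball] at *
          have := dist_triangle_right z y (x + d • c)
          linarith
        refine (measure_mono hsub).trans (((hF y hy (d/2) (by positivity) ?_).2).trans (ENNReal.ofReal_le_ofReal ?_))
        · rw [hdd]; exact ENNReal.ofReal_le_ofReal (by linarith)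
        · gcongr; linarith
    calc μH[n] (F ∩ ball x r) ≤ ∑ c ∈ hTf.toFinset, μH[n] (F ∩ ball (x + d • c) (d / 4)) :=
          (measure_mono hcov).trans (measure_biUnion_finset_le _ _)
      _ ≤ ∑ c ∈ hTf.toFinset, ENNReal.ofReal (C₀ * d ^ n) := Finset.sum_le_sum hone
      _ = ENNReal.ofReal (hTf.toFinset.card * (C₀ * d ^ n)) := by
          rw [Finset.sum_const, nsmul_eq_mul, ENNReal.ofReal_mul (p := (hTf.toFinset.card : ℝ)) (Nat.cast_nonneg _), ENNReal.ofReal_natCast]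
      _ ≤ ENNReal.ofReal (N * C₀ * r ^ n) := by
          refine ENNReal.ofReal_le_ofReal ?_
          rw [mul_assoc]
          have h7 : (hTf.toFinset.card : ℝ) ≤ N := by rw [hN]; linarith
          have h8 : d ^ n ≤ r ^ n := pow_le_pow_left₀ hd0 hdr.le n
          have h9 : C₀ * d ^ n ≤ C₀ * r ^ n := mul_le_mul_of_nonneg_left h8 (by linarith)
          exact mul_le_mul h7 h9 (by positivity) (by linarith)

section
variable {n : ℕ} {F : Set (Euc (n+1))} {μ : Measure (Euc (n+1))} {Cl : ℝ}

lemma sideLen_pos (q : Cube n) : 0 < sideLen q := by unfold sideLen; positivity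

lemma cube_dist (L : DSLattice n F μ Cl) {q : Cube n} (hq : L.mem q) {x y : Euc (n+1)} (hx : x ∈ q.2) (hy : y ∈ q.2) :
    dist x y ≤ sideLen q := by
  have h := (Metric.edist_le_ediam_of_mem hx hy).trans (L.diam_le _ _ hq)
  rw [edist_dist] at h
  exact (ENNReal.ofReal_le_ofReal_iff (sideLen_pos q).le).1 h

lemma dil_sub (L : DSLattice n F μ Cl) {q : Cube n} (hq : L.mem q) :
    dilCube F 2 q ⊆ closedBall (L.center q.2) (2 * sideLen q) := by
  rintro x ⟨-, hx⟩
  rw [mem_closedBall]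
  have : dist x (L.center q.2) - sideLen q ≤ infDist x q.2 := by
    rw [le_infDist (L.nonempty _ _ hq)]
    intro y hy
    have := dist_triangle x y (L.center q.2)
    have := cube_dist L hq hy (L.center_mem _ _ hq)
    linarith
  linarith

lemma sub_dil (L : DSLattice n F μ Cl) {q : Cube n} (hq : L.mem q) : q.2 ⊆ dilCube F 2 q := by
  intro x hx
  refine ⟨L.subset_F _ _ hq hx, ?_⟩
  rw [infDist_zero_of_mem hx]
  have := sideLen_pos q
  linarith

lemma cube_sub_ball (L : DSLattice n F μ Cl) {q : Cube n} (hq : L.mem q) :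
    q.2 ⊆ ball (L.center q.2) (4 * sideLen q) := by
  intro x hx
  rw [mem_ball]
  have := cube_dist L hq hx (L.center_mem _ _ hq)
  have := sideLen_pos q
  linarith

lemma cube_fin (L : DSLattice n F μ Cl) {q : Cube n} (hq : L.mem q) : μ q.2 ≠ ⊤ :=
  ((L.measure_ub _ _ hq).trans_lt ENNReal.ofReal_lt_top).ne

lemma cube_lb (L : DSLattice n F μ Cl) {q : Cube n} (hq : L.mem q) :
    ENNReal.ofReal (Cl⁻¹ * sideLen q ^ n) ≤ μ q.2 := L.measure_lb _ _ hq

lemma cube_pos (L : DSLattice n F μ Cl) {q : Cube n} (hq : L.mem q) : 0 < μ q.2 := by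
  refine lt_of_lt_of_le (ENNReal.ofReal_pos.2 ?_) (cube_lb L hq)
  have := sideLen_pos q
  have := L.one_le_Cl
  positivity

lemma countable_cubes (L : DSLattice n F μ Cl) {R : Cube n} (hR : L.mem R) :
    {q : Cube n | L.mem q ∧ q.2 ⊆ R.2}.Countable := by
  have : IsFiniteMeasure (μ.restrict R.2) := ⟨by
    rw [Measure.restrict_apply_univ]; exact (cube_fin L hR).lt_top⟩
  have h1 : ∀ j : ℤ, {Q : Set (Euc (n+1)) | Q ∈ L.cube j ∧ Q ⊆ R.2}.Countable := by
    intro j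
    have h := Measure.countable_meas_pos_of_disjoint_iUnion (μ := μ.restrict R.2)
      (As := fun Q : {Q : Set (Euc (n+1)) | Q ∈ L.cube j ∧ Q ⊆ R.2} => (Q : Set (Euc (n+1))))
      (fun Q => L.measurableSet j Q Q.2.1)
      (fun Q Q' h => L.disj j Q Q.2.1 Q' Q'.2.1 (fun hh => h (Subtype.ext hh)))
    have h2 : {Q : {Q : Set (Euc (n+1)) | Q ∈ L.cube j ∧ Q ⊆ R.2} | 0 < μ.restrict R.2 (Q : Set (Euc (n+1)))} = univ := by
      refine eq_univ_of_forall fun Q => ?_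
      simp only [mem_ofPred_eq]
      rw [Measure.restrict_eq_self _ Q.2.2]
      exact cube_pos L (q := (j, Q)) Q.2.1
    rw [h2, countable_univ_iff] at h
    exact h
  have h2 : {q : Cube n | L.mem q ∧ q.2 ⊆ R.2} ⊆
      ⋃ j : ℤ, (fun Q => ((j, Q) : Cube n)) '' {Q : Set (Euc (n+1)) | Q ∈ L.cube j ∧ Q ⊆ R.2} := by
    rintro ⟨j, Q⟩ ⟨hq, hqR⟩
    exact mem_iUnion.2 ⟨j, Q, ⟨hq, hqR⟩, rfl⟩
  exact (countable_iUnion fun j => (h1 j).image _).mono h2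

lemma sideLen_bdd (hn : 2 ≤ n) (L : DSLattice n F μ Cl) {R : Cube n} (hR : L.mem R) :
    ∃ M, ∀ q : Cube n, L.mem q → q.2 ⊆ R.2 → sideLen q ≤ M := by
  have hCl : 0 < Cl := by linarith [L.one_le_Cl]
  refine ⟨max 1 (Cl * (μ R.2).toReal), fun q hq hqR => ?_⟩
  by_contra! h
  have h1 : 1 < sideLen q := (le_max_left _ _).trans_lt h
  have h2 : Cl * (μ R.2).toReal < sideLen q := (le_max_right _ _).trans_lt h
  have h3 : sideLen q ≤ sideLen q ^ n := le_self_pow₀ h1.le (by omega)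
  have h4 := (ENNReal.ofReal_le_iff_le_toReal (cube_fin L hR)).1 ((cube_lb L hq).trans (measure_mono hqR))
  rw [inv_mul_le_iff₀ hCl] at h4
  linarith

end


section
variable {n : ℕ} {Ω : Set (Euc (n+1))} {p : Euc (n+1)} {μ : Measure (Euc (n+1))} {Cl : ℝ}

lemma BH_bound (hn : 2 ≤ n) (hΩ : IsOpen Ω) (hP : PosAt Ω p) {K c' A : ℝ} (hK : 0 < K) (hc' : 0 < c') (hA : 0 < A)
    (hμ : μ = (μH[n]).restrict (frontier Ω))
    (hreg : ∀ x ∈ frontier Ω, ∀ r : ℝ, 0 < r → μH[n] (frontier Ω ∩ ball x r) ≤ ENNReal.ofReal (K * r ^ n))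
    (L : DSLattice n (frontier Ω) μ Cl) {R₀ : Cube n} (hR : L.mem R₀) (hcR : c' ≤ hMeasure Ω p R₀.2) :
    μ (BHset Ω μ L p R₀ A) ≤
      ENNReal.ofReal (K * 21 ^ n * (Cl * (K * (3 * sideLen R₀) ^ n / c' / A))) := by
  have hCl : 0 < Cl := by linarith [L.one_le_Cl]
  have hℓ0 := sideLen_pos R₀
  have hreg' : ∀ x ∈ frontier Ω, ∀ r : ℝ, 0 < r → ∀ s, s ⊆ frontier Ω → s ⊆ ball x r →
      μ s ≤ ENNReal.ofReal (K * r ^ n) := by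
    intro x hx r hr s hs hs'
    rw [hμ, Measure.restrict_eq_self _ hs]
    exact (measure_mono (subset_inter hs hs')).trans (hreg x hx r hr)
  have hcen : ∀ q : Cube n, L.mem q → L.center q.2 ∈ frontier Ω := fun q hq =>
    L.subset_F _ _ hq (L.center_mem _ _ hq)
  have hdil : ∀ q : Cube n, L.mem q → μ (dilCube (frontier Ω) 2 q) ≤ ENNReal.ofReal (K * (3 * sideLen q) ^ n) := by
    intro q hq
    have := sideLen_pos q
    exact hreg' _ (hcen q hq) _ (by positivity) _ (fun x hx => hx.1)
      ((dil_sub L hq).trans (closedBall_subset_ball (by linarith)))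
  have hfin : ∀ q : Cube n, L.mem q → μ (dilCube (frontier Ω) 2 q) ≠ ⊤ := fun q hq =>
    ((hdil q hq).trans_lt ENNReal.ofReal_lt_top).ne
  have hpos : ∀ q : Cube n, L.mem q → 0 < (μ (dilCube (frontier Ω) 2 q)).toReal := fun q hq =>
    ENNReal.toReal_pos ((cube_pos L hq).trans_le (measure_mono (sub_dil L hq))).ne' (hfin q hq)
  set E : ℝ := K * (3 * sideLen R₀) ^ n / c' with hE
  have hE0 : 0 < E := by positivity
  have hdens : E⁻¹ ≤ dens Ω μ p 2 R₀ := by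
    unfold dens
    rw [hE, inv_div]
    have h1 : (μ (dilCube (frontier Ω) 2 R₀)).toReal ≤ K * (3 * sideLen R₀) ^ n :=
      ENNReal.toReal_le_of_le_ofReal (by positivity) (hdil R₀ hR)
    have h2 : c' ≤ hMeasure Ω p (dilCube (frontier Ω) 2 R₀) := hcR.trans (hM_mono hP (sub_dil L hR))
    exact div_le_div₀ (hc'.le.trans h2) h2 (hpos R₀ hR) h1
  -- each HD cube
  have hq1 : ∀ q ∈ HDfam Ω μ L p R₀ A, L.mem q ∧ q.2 ⊆ R₀.2 ∧
      sideLen q ^ n ≤ Cl * (E / A) * hMeasure Ω p (dilCube (frontier Ω) 2 q) := by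
    intro q hq
    obtain ⟨hm, hs, hd⟩ := hq.1
    refine ⟨hm, hs, ?_⟩
    have h1 : A * E⁻¹ ≤ hMeasure Ω p (dilCube (frontier Ω) 2 q) / (μ (dilCube (frontier Ω) 2 q)).toReal :=
      (mul_le_mul_of_nonneg_left hdens hA.le).trans hd
    rw [le_div_iff₀ (hpos q hm)] at h1
    have h2 := (ENNReal.ofReal_le_iff_le_toReal (hfin q hm)).1 ((cube_lb L hm).trans (measure_mono (sub_dil L hm)))
    rw [inv_mul_le_iff₀ hCl] at h2
    refine h2.trans ?_
    rw [mul_assoc]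
    refine mul_le_mul_of_nonneg_left ?_ hCl.le
    calc (μ (dilCube (frontier Ω) 2 q)).toReal
        = E / A * (A * E⁻¹ * (μ (dilCube (frontier Ω) 2 q)).toReal) := by field_simp
      _ ≤ _ := mul_le_mul_of_nonneg_left h1 (by positivity)
  obtain ⟨M, hM⟩ := sideLen_bdd hn L hR
  obtain ⟨u, hu, hud, hucov⟩ := Vitali.exists_disjoint_subfamily_covering_enlargement_closedBall
    (HDfam Ω μ L p R₀ A) (fun q => L.center q.2) (fun q => 4 * sideLen q) (4 * M)
    (fun q hq => by have := hM q (hq1 q hq).1 (hq1 q hq).2.1; linarith) 5 (by norm_num)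
  have huc : u.Countable := (countable_cubes L hR).mono fun q hq => show L.mem q ∧ q.2 ⊆ R₀.2 from ⟨(hq1 q (hu hq)).1, (hq1 q (hu hq)).2.1⟩
  have hcov : BHset Ω μ L p R₀ A ⊆ ⋃ q ∈ u, frontier Ω ∩ ball (L.center q.2) (21 * sideLen q) := by
    intro x hx
    obtain ⟨q, hq, hxq⟩ := mem_iUnion₂.1 hx
    obtain ⟨b, hb, hqb⟩ := hucov q hq
    have hm := (hq1 q hq).1
    refine mem_iUnion₂.2 ⟨b, hb, L.subset_F _ _ hm hxq, ?_⟩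
    have h1 := hqb (ball_subset_closedBall (cube_sub_ball L hm hxq))
    have := sideLen_pos b
    exact closedBall_subset_ball (by linarith) h1
  have hsum : ∀ S : Finset u, ∑ q ∈ S, sideLen (q : Cube n) ^ n ≤ Cl * (E / A) := by
    intro S
    have h1 : ∑ q ∈ S, hMeasure Ω p (dilCube (frontier Ω) 2 (q : Cube n)) ≤ 1 := by
      refine hM_sum_le_one hn hΩ hP S (fun q => L.center (q : Cube n).2) (fun q => sideLen (q : Cube n)) _
        ?_ (fun q _ => sideLen_pos _) (fun q _ => dil_sub L (hq1 q (hu q.2)).1) ?_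
      · intro q _ hq
        have := hcen q (hq1 q (hu q.2)).1
        have h2 := (hΩ.frontier_eq.le this).2
        exact h2 hq
      · intro q _ q' _ hqq
        exact hud q.2 q'.2 (fun h => hqq (Subtype.ext h))
    calc ∑ q ∈ S, sideLen (q : Cube n) ^ n
        ≤ ∑ q ∈ S, Cl * (E / A) * hMeasure Ω p (dilCube (frontier Ω) 2 (q : Cube n)) :=
          Finset.sum_le_sum fun q _ => (hq1 q (hu q.2)).2.2
      _ = Cl * (E / A) * ∑ q ∈ S, hMeasure Ω p (dilCube (frontier Ω) 2 (q : Cube n)) := by rw [Finset.mul_sum]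
      _ ≤ Cl * (E / A) * 1 := mul_le_mul_of_nonneg_left h1 (by positivity)
      _ = _ := mul_one _
  calc μ (BHset Ω μ L p R₀ A) ≤ ∑' q : u, μ (frontier Ω ∩ ball (L.center (q : Cube n).2) (21 * sideLen (q : Cube n))) :=
        (measure_mono hcov).trans (measure_biUnion_le μ huc _)
    _ ≤ ∑' q : u, ENNReal.ofReal (K * 21 ^ n * sideLen (q : Cube n) ^ n) := by
        refine ENNReal.tsum_le_tsum fun q => ?_
        have := sideLen_pos (q : Cube n)
        rw [mul_assoc, ← mul_pow]
        exact hreg' _ (hcen q (hq1 q (hu q.2)).1) _ (by positivity) _ inter_subset_left inter_subset_right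
    _ ≤ _ := by
        rw [ENNReal.tsum_eq_iSup_sum]
        refine iSup_le fun S => ?_
        rw [← ENNReal.ofReal_sum_of_nonneg (fun q _ => by have := sideLen_pos (q : Cube n); positivity), ← Finset.mul_sum]
        exact ENNReal.ofReal_le_ofReal (mul_le_mul_of_nonneg_left (hsum S) (by positivity))

lemma LD_disj (L : DSLattice n (frontier Ω) μ Cl) {R₀ : Cube n} {A : ℝ} :
    (LDfam Ω μ L p R₀ A).PairwiseDisjoint (fun q => q.2) := by
  have key : ∀ q ∈ LDfam Ω μ L p R₀ A, ∀ q' ∈ LDfam Ω μ L p R₀ A, q'.1 < q.1 → Disjoint q.2 q'.2 := by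
    intro q hq q' hq' h
    by_contra hd
    have hne := not_disjoint_iff_nonempty_inter.1 hd
    exact hq.2 q' hq'.1.1 h (L.nested q.1 q'.1 h.le q.2 hq.1.1 q'.2 hq'.1.1 hne) hq'.1
  intro q hq q' hq' hne
  rcases lt_trichotomy q.1 q'.1 with h | h | h
  · exact (key q' hq' q hq h).symm
  · refine L.disj q.1 q.2 hq.1.1 q'.2 (h ▸ hq'.1.1) fun h2 => hne (Prod.ext h h2)
  · exact key q hq q' hq' h

lemma LD_finite (hP : PosAt Ω p) (L : DSLattice n (frontier Ω) μ Cl) {R₀ : Cube n} (hR : L.mem R₀) {A : ℝ} (hA : 0 < A)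
    (S : Finset (LDfam Ω μ L p R₀ A)) :
    hMeasure Ω p (⋃ q ∈ S, (q : Cube n).2) ≤ A⁻¹ * hMeasure Ω p R₀.2 := by
  have hm : 0 < (μ R₀.2).toReal := ENNReal.toReal_pos (cube_pos L hR).ne' (cube_fin L hR)
  have h0 := hM_nonneg hP R₀.2
  have hs : ∑ q ∈ S, (μ (q : Cube n).2).toReal ≤ (μ R₀.2).toReal := by
    rw [← ENNReal.toReal_sum (fun q _ => cube_fin L q.2.1.1)]
    refine ENNReal.toReal_mono (cube_fin L hR) ?_
    rw [← measure_biUnion_finset (f := fun q : LDfam Ω μ L p R₀ A => (q : Cube n).2)]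
    · exact measure_mono (iUnion₂_subset fun q _ => q.2.1.2.1)
    · intro q _ q' _ h
      exact LD_disj L q.2 q'.2 fun h2 => h (Subtype.ext h2)
    · exact fun q _ => L.measurableSet _ _ q.2.1.1
  calc hMeasure Ω p (⋃ q ∈ S, (q : Cube n).2) ≤ ∑ q ∈ S, hMeasure Ω p (q : Cube n).2 := hM_biUnion hP S _
    _ ≤ ∑ q ∈ S, A⁻¹ * (hMeasure Ω p R₀.2 / (μ R₀.2).toReal) * (μ (q : Cube n).2).toReal := by
        refine Finset.sum_le_sum fun q _ => ?_
        have hq : 0 < (μ (q : Cube n).2).toReal :=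
          ENNReal.toReal_pos (cube_pos L q.2.1.1).ne' (cube_fin L q.2.1.1)
        exact (div_le_iff₀ hq).1 q.2.1.2.2
    _ = A⁻¹ * (hMeasure Ω p R₀.2 / (μ R₀.2).toReal) * ∑ q ∈ S, (μ (q : Cube n).2).toReal := by rw [Finset.mul_sum]
    _ ≤ A⁻¹ * (hMeasure Ω p R₀.2 / (μ R₀.2).toReal) * (μ R₀.2).toReal :=
        mul_le_mul_of_nonneg_left hs (by positivity)
    _ = _ := by field_simp

lemma LD_rest (L : DSLattice n (frontier Ω) μ Cl) {R₀ : Cube n} (hR : L.mem R₀) {A : ℝ} {η : ENNReal} (hη : 0 < η) :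
    ∃ S : Finset (LDfam Ω μ L p R₀ A), μ (BLset Ω μ L p R₀ A \ ⋃ q ∈ S, (q : Cube n).2) ≤ η := by
  have hc : (LDfam Ω μ L p R₀ A).Countable := (countable_cubes L hR).mono fun q hq => show L.mem q ∧ q.2 ⊆ R₀.2 from ⟨hq.1.1, hq.1.2.1⟩
  have : Countable (LDfam Ω μ L p R₀ A) := hc.to_subtype
  have hsum : ∑' q : LDfam Ω μ L p R₀ A, μ (q : Cube n).2 ≠ ⊤ := by
    rw [← measure_iUnion (f := fun q : LDfam Ω μ L p R₀ A => (q : Cube n).2) (fun q q' h => LD_disj L q.2 q'.2 fun h2 => h (Subtype.ext h2))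
      (fun q => L.measurableSet _ _ q.2.1.1)]
    exact ((measure_mono (iUnion_subset fun q => q.2.1.2.1)).trans_lt (cube_fin L hR).lt_top).ne
  obtain ⟨S, hS⟩ := ((ENNReal.tendsto_tsum_compl_atTop_zero hsum).eventually (gt_mem_nhds hη)).exists
  refine ⟨S, le_trans ?_ hS.le⟩
  refine (measure_mono (t := ⋃ q : {x // x ∉ S}, ((q : LDfam Ω μ L p R₀ A) : Cube n).2) ?_).trans (measure_iUnion_le _)
  rintro x ⟨hx, hxS⟩
  obtain ⟨q, hq, hxq⟩ := mem_iUnion₂.1 hx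
  refine mem_iUnion.2 ⟨⟨⟨q, hq⟩, fun h => hxS (mem_iUnion₂.2 ⟨⟨q, hq⟩, h, hxq⟩)⟩, hxq⟩

lemma BH_meas (L : DSLattice n (frontier Ω) μ Cl) {R₀ : Cube n} (hR : L.mem R₀) {A : ℝ} :
    MeasurableSet (BHset Ω μ L p R₀ A) :=
  MeasurableSet.biUnion ((countable_cubes L hR).mono fun q hq => show L.mem q ∧ q.2 ⊆ R₀.2 from ⟨hq.1.1, hq.1.2.1⟩)
    fun _ hq => L.measurableSet _ _ hq.1.1

lemma BL_meas (L : DSLattice n (frontier Ω) μ Cl) {R₀ : Cube n} (hR : L.mem R₀) {A : ℝ} :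
    MeasurableSet (BLset Ω μ L p R₀ A) :=
  MeasurableSet.biUnion ((countable_cubes L hR).mono fun q hq => show L.mem q ∧ q.2 ⊆ R₀.2 from ⟨hq.1.1, hq.1.2.1⟩)
    fun _ hq => L.measurableSet _ _ hq.1.1

end

/-- Under the standing assumptions, there are `A₀ ≥ 1` and `c₁ > 0`,
depending only on `n`, the AD-regularity and lattice constants, `c`, `c'` and the
weak-`A∞` gauge, such that for `A ≥ A₀` the set `G₀ := R₀ \ (B_H ∪ B_L)` satisfies
`ω^p(G₀) ≥ c₁` and `μ(G₀) ≥ c₁ μ(R₀)`. -/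
theorem good_set_estimate
    (n : ℕ) (hn : 2 ≤ n) (C₀ Cl c c' : ℝ) (hC₀ : 1 ≤ C₀) (hCl : 1 ≤ Cl)
    (hc : 0 < c) (hc' : 0 < c') (D : ℝ → ℝ) :
    ∃ A₀ c₁ : ℝ, 1 ≤ A₀ ∧ 0 < c₁ ∧
      ∀ A : ℝ, A₀ ≤ A →
      ∀ (F : Set (Euc (n+1))), IsClosed F → ADRegular n C₀ F →
      ∀ Ω : Set (Euc (n+1)), Ω = Fᶜ → frontier Ω = F →
      ∀ μ : Measure (Euc (n+1)), μ = (μH[n]).restrict (frontier Ω) →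
      ∀ (L : DSLattice n (frontier Ω) μ Cl) (R₀ : Cube n) (p : Euc (n+1)),
        L.mem R₀ → p ∈ Ω → p ∉ cubeBall L 4 R₀ →
        c * sideLen R₀ ≤ infDist p (frontier Ω) →
        infDist p (frontier Ω) ≤ infDist p R₀.2 →
        infDist p R₀.2 ≤ c⁻¹ * sideLen R₀ →
        c' ≤ hMeasure Ω p R₀.2 →
        WeakAInftyBallWith n Ω p (L.center R₀.2) (4 * sideLen R₀) D →
        c₁ ≤ hMeasure Ω p (R₀.2 \ (BHset Ω μ L p R₀ A ∪ BLset Ω μ L p R₀ A)) ∧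
        ENNReal.ofReal c₁ * μ R₀.2 ≤
          μ (R₀.2 \ (BHset Ω μ L p R₀ A ∪ BLset Ω μ L p R₀ A)) := by
  classical
  set ε : ℝ := min (c' / 8) (1 / 2) with hε
  have hε0 : 0 < ε := lt_min (by positivity) (by norm_num)
  have hε1 : ε < 1 := (min_le_right _ _).trans_lt (by norm_num)
  have hε8 : ε ≤ c' / 8 := min_le_left _ _
  by_cases hD : D ε ∈ Ioo (0:ℝ) 1
  swap
  · refine ⟨1, 1, le_rfl, one_pos, ?_⟩
    intro A _ F _ _ Ω _ _ μ _ L R₀ p _ _ _ _ _ _ _ hw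
    exact absurd (hw ε ⟨hε0, hε1⟩).1 hD
  obtain ⟨K, hK, hreg⟩ := upper_reg n hn C₀ hC₀
  have hCl0 : 0 < Cl := by linarith
  have hD0 : 0 < D ε := hD.1
  set Z : ℝ := K * 21 ^ n * (Cl * (K * 3 ^ n / c')) * Cl / D ε with hZ
  refine ⟨max 2 Z, min (c' / 4) (D ε), le_max_of_le_left (by norm_num), lt_min (by positivity) hD0, ?_⟩
  intro A hA F hF hAD Ω hΩF hfr μ hμ L R₀ p hR hp _ _ _ _ hcR hw
  have hΩ : IsOpen Ω := by rw [hΩF]; exact hF.isOpen_compl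
  have hP : PosAt Ω p := posAt_of_pos hp (hc'.trans_le hcR)
  have hA2 : 2 ≤ A := (le_max_left _ _).trans hA
  have hAZ : Z ≤ A := (le_max_right _ _).trans hA
  have hA0 : 0 < A := by linarith
  have hℓ := sideLen_pos R₀
  have hweak := (hw ε ⟨hε0, hε1⟩).2
  have hBR : R₀.2 ⊆ ball (L.center R₀.2) (4 * sideLen R₀) ∩ frontier Ω :=
    subset_inter (cube_sub_ball L hR) (L.subset_F _ _ hR)
  have hμeq : ∀ s, s ⊆ frontier Ω → μ s = μH[n] s := fun s hs => by
    rw [hμ, Measure.restrict_eq_self _ hs]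
  -- small measure implies small harmonic measure
  have hsmall : ∀ E : Set (Euc (n+1)), MeasurableSet E → E ⊆ R₀.2 → μ E ≤ ENNReal.ofReal (D ε) * μ R₀.2 →
      hMeasure Ω p E ≤ ε := by
    intro E hE hER hEμ
    refine (hweak E hE (hER.trans hBR) ?_).trans ?_
    · rw [← hμeq E (hER.trans (L.subset_F _ _ hR))]
      refine hEμ.trans (mul_le_mul_right ?_ _)
      rw [hμeq _ (L.subset_F _ _ hR)]
      exact measure_mono hBR
    · have := hM_le_one hP (ball (L.center R₀.2) (2 * (4 * sideLen R₀)))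
      nlinarith
  have hBHs : BHset Ω μ L p R₀ A ⊆ R₀.2 := iUnion₂_subset fun q hq => hq.1.2.1
  have hBLs : BLset Ω μ L p R₀ A ⊆ R₀.2 := iUnion₂_subset fun q hq => hq.1.2.1
  have hmBH : MeasurableSet (BHset Ω μ L p R₀ A) := BH_meas L hR
  have hmBL : MeasurableSet (BLset Ω μ L p R₀ A) := BL_meas L hR
  have hmR : MeasurableSet R₀.2 := L.measurableSet _ _ hR
  have hH : hMeasure Ω p (BHset Ω μ L p R₀ A) ≤ ε := by
    refine hsmall _ hmBH hBHs ?_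
    have h1 := BH_bound hn hΩ hP hK hc' hA0 hμ (by rw [hfr]; exact hreg F hAD) L hR hcR
    refine h1.trans (le_trans ?_ (mul_le_mul_right (cube_lb L hR) _))
    rw [← ENNReal.ofReal_mul hD0.le]
    refine ENNReal.ofReal_le_ofReal ?_
    have h2 : K * 21 ^ n * (Cl * (K * (3 * sideLen R₀) ^ n / c' / A)) =
        Z / A * (D ε * (Cl⁻¹ * sideLen R₀ ^ n)) := by
      rw [hZ, mul_pow]
      field_simp
    rw [h2]
    have h3 : Z / A ≤ 1 := (div_le_one hA0).2 hAZ
    have h4 : 0 ≤ D ε * (Cl⁻¹ * sideLen R₀ ^ n) := by positivity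
    nlinarith
  have hL : hMeasure Ω p (BLset Ω μ L p R₀ A) ≤ A⁻¹ * hMeasure Ω p R₀.2 + ε := by
    obtain ⟨S, hS⟩ := LD_rest (p := p) (A := A) L hR
      (η := ENNReal.ofReal (D ε) * μ R₀.2) (ENNReal.mul_pos (ENNReal.ofReal_pos.2 hD0).ne' (cube_pos L hR).ne')
    have h1 := LD_finite hP L hR hA0 S
    have h2 := hsmall _ (hmBL.diff (Finset.measurableSet_biUnion S fun q _ => L.measurableSet _ _ q.2.1.1))
      (diff_subset.trans hBLs) hS
    have h3 : BLset Ω μ L p R₀ A ⊆ (⋃ q ∈ S, (q : Cube n).2) ∪ (BLset Ω μ L p R₀ A \ ⋃ q ∈ S, (q : Cube n).2) := by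
      intro x hx
      by_cases h : x ∈ ⋃ q ∈ S, (q : Cube n).2
      · exact Or.inl h
      · exact Or.inr ⟨hx, h⟩
    have h4 := (hM_mono hP h3).trans (hM_union hP _ _)
    linarith
  set G := R₀.2 \ (BHset Ω μ L p R₀ A ∪ BLset Ω μ L p R₀ A) with hG
  have hmG : MeasurableSet G := hmR.diff (hmBH.union hmBL)
  have hGlow : c' / 4 ≤ hMeasure Ω p G := by
    have h1 : R₀.2 ⊆ G ∪ (BHset Ω μ L p R₀ A ∪ BLset Ω μ L p R₀ A) := by
      rw [hG, diff_union_self]; exact subset_union_left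
    have h2 := (hM_mono hP h1).trans (hM_union hP _ _)
    have h3 := hM_union hP (BHset Ω μ L p R₀ A) (BLset Ω μ L p R₀ A)
    have h4 : A⁻¹ ≤ 1 / 2 := by
      rw [one_div]; exact inv_anti₀ (by norm_num) hA2
    have h5 : A⁻¹ * hMeasure Ω p R₀.2 ≤ 1 / 2 * hMeasure Ω p R₀.2 :=
      mul_le_mul_of_nonneg_right h4 (hM_nonneg hP _)
    linarith
  refine ⟨(min_le_left _ _).trans hGlow, ?_⟩
  by_contra! hlt
  have h1 : hMeasure Ω p G ≤ ε := by
    refine hsmall G hmG diff_subset (hlt.le.trans (mul_le_mul_left ?_ _))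
    exact ENNReal.ofReal_le_ofReal (min_le_right _ _)
  linarith


end HarmMeas
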